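/- arXiv:1512.00231 — 2 statements merged into one kernel-verified Lean document; each statement's English description precedes it below -/
import Mathlib

section
/- Let μ be an invariant, continuous and simple valuation on C^N. Then there exists a continuous function φ : [0,∞) → ℝ with φ(0) = 0 such that μ(t·1_K) = φ(t) · vol_N(K) for every t ≥ 0 and every convex body K ⊆ ℝ^N, where 1_K is the characteristic function of K and vol_N is the N-dimensional Lebesgue measure. -/
open Filter Topology MeasureTheory

noncomputable section

/-- A function `f : ℝ^N → ℝ` is quasi-concave if it is nonnegative and all its
superlevel sets `{x | t ≤ f x}` for `t > 0` are empty or compact and convex. -/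
def QuasiConcave {N : ℕ} (f : EuclideanSpace ℝ (Fin N) → ℝ) : Prop :=
  (∀ x, 0 ≤ f x) ∧
  ∀ t : ℝ, 0 < t →
    {x | t ≤ f x} = ∅ ∨ (IsCompact {x | t ≤ f x} ∧ Convex ℝ {x | t ≤ f x})

/-- `μ` is a valuation on `C^N`: it vanishes on the zero function and satisfies
the inclusion-exclusion property with respect to pointwise max and min. -/
def IsValuation {N : ℕ} (μ : (EuclideanSpace ℝ (Fin N) → ℝ) → ℝ) : Prop :=
  μ (fun _ => 0) = 0 ∧
  ∀ f g : EuclideanSpace ℝ (Fin N) → ℝ,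
    QuasiConcave f → QuasiConcave g →
    QuasiConcave (fun x => max (f x) (g x)) →
    μ (fun x => max (f x) (g x)) + μ (fun x => min (f x) (g x)) = μ f + μ g

/-- `μ` is invariant under rigid motions (isometries) of `ℝ^N`. -/
def IsInvariantVal {N : ℕ} (μ : (EuclideanSpace ℝ (Fin N) → ℝ) → ℝ) : Prop :=
  ∀ (T : EuclideanSpace ℝ (Fin N) ≃ᵢ EuclideanSpace ℝ (Fin N))
    (f : EuclideanSpace ℝ (Fin N) → ℝ), QuasiConcave f →
    μ (fun x => f (T x)) = μ f

/-- `μ` is continuous: it preserves limits of monotone pointwise convergent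
sequences of quasi-concave functions. -/
def IsContinuousVal {N : ℕ} (μ : (EuclideanSpace ℝ (Fin N) → ℝ) → ℝ) : Prop :=
  ∀ (fi : ℕ → EuclideanSpace ℝ (Fin N) → ℝ) (f : EuclideanSpace ℝ (Fin N) → ℝ),
    (∀ i, QuasiConcave (fi i)) → QuasiConcave f →
    (Monotone fi ∨ Antitone fi) →
    (∀ x, Tendsto (fun i => fi i x) atTop (𝓝 (f x))) →
    Tendsto (fun i => μ (fi i)) atTop (𝓝 (μ f))

/-- `μ` is simple: it vanishes on quasi-concave functions which are zero a.e. -/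
def IsSimpleVal {N : ℕ} (μ : (EuclideanSpace ℝ (Fin N) → ℝ) → ℝ) : Prop :=
  ∀ f : EuclideanSpace ℝ (Fin N) → ℝ, QuasiConcave f →
    (∀ᵐ x : EuclideanSpace ℝ (Fin N), f x = 0) → μ f = 0

/-- `μ` is monotone increasing: `f ≤ g` pointwise implies `μ f ≤ μ g`. -/
def IsMonotoneVal {N : ℕ} (μ : (EuclideanSpace ℝ (Fin N) → ℝ) → ℝ) : Prop :=
  ∀ f g : EuclideanSpace ℝ (Fin N) → ℝ, QuasiConcave f → QuasiConcave g →
    (∀ x, f x ≤ g x) → μ f ≤ μ g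

/-- A convex body in `ℝ^N` is a nonempty compact convex subset. -/
def IsConvexBody {N : ℕ} (K : Set (EuclideanSpace ℝ (Fin N))) : Prop :=
  K.Nonempty ∧ IsCompact K ∧ Convex ℝ K

section hadwiger_proof
open scoped Pointwise
set_option linter.unusedSectionVars false
set_option linter.deprecated false


/-! ### Convex bodies (possibly empty) and valuations on them -/

/-- compact convex set, possibly empty -/
def CB {V : Type} [NormedAddCommGroup V] [InnerProductSpace ℝ V] (K : Set V) : Prop :=
  IsCompact K ∧ Convex ℝ K

/-- monotone-continuous valuations on compact convex sets -/
structure VC {V : Type} [NormedAddCommGroup V] [InnerProductSpace ℝ V] (f : Set V → ℝ) : Prop where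
  empty : f ∅ = 0
  union : ∀ K L, CB K → CB L → Convex ℝ (K ∪ L) → f (K ∪ L) + f (K ∩ L) = f K + f L
  cont : ∀ K : ℕ → Set V, (∀ i, CB (K i)) → Antitone K →
    Tendsto (fun i => f (K i)) atTop (𝓝 (f (⋂ i, K i)))

/-- simplicity: vanishing on subsets of hyperplanes -/
def NullVal {V : Type} [NormedAddCommGroup V] [InnerProductSpace ℝ V] (f : Set V → ℝ) : Prop :=
  ∀ K, CB K → ∀ u : V, u ≠ 0 → ∀ c : ℝ, K ⊆ {x | inner ℝ u x = c} → f K = 0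

/-- cut additivity -/
def CutVal {V : Type} [NormedAddCommGroup V] [InnerProductSpace ℝ V] (f : Set V → ℝ) : Prop :=
  ∀ K, CB K → ∀ u : V, u ≠ 0 → ∀ c : ℝ,
    f K = f (K ∩ {x | inner ℝ u x ≤ c}) + f (K ∩ {x | c ≤ inner ℝ u x})

/-- translation invariance -/
def TransInv {V : Type} [NormedAddCommGroup V] [InnerProductSpace ℝ V] (f : Set V → ℝ) : Prop :=
  ∀ K, CB K → ∀ v : V, f ({v} + K) = f K


section basics
variable {V : Type} [NormedAddCommGroup V] [InnerProductSpace ℝ V]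

lemma CB.empty : CB (∅ : Set V) := ⟨isCompact_empty, convex_empty⟩

lemma CB.singleton (v : V) : CB ({v} : Set V) := ⟨isCompact_singleton, convex_singleton v⟩

lemma CB.add {K L : Set V} (hK : CB K) (hL : CB L) : CB (K + L) :=
  ⟨hK.1.add hL.1, hK.2.add hL.2⟩

lemma CB.smul {K : Set V} (hK : CB K) (c : ℝ) : CB (c • K) :=
  ⟨hK.1.smul c, hK.2.smul c⟩

lemma CB.inter {K L : Set V} (hK : CB K) (hL : CB L) : CB (K ∩ L) :=
  ⟨hK.1.inter hL.1, hK.2.inter hL.2⟩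

lemma isClosed_le_half (u : V) (c : ℝ) : IsClosed {x : V | inner ℝ u x ≤ c} :=
  isClosed_le (by fun_prop) continuous_const

lemma isClosed_ge_half (u : V) (c : ℝ) : IsClosed {x : V | c ≤ inner ℝ u x} :=
  isClosed_le continuous_const (by fun_prop)

lemma convex_le_half (u : V) (c : ℝ) : Convex ℝ {x : V | inner ℝ u x ≤ c} :=
  convex_halfSpace_le (innerₗ V u).isLinear c

lemma convex_ge_half (u : V) (c : ℝ) : Convex ℝ {x : V | c ≤ inner ℝ u x} :=
  convex_halfSpace_ge (innerₗ V u).isLinear c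

lemma CB.interLe {K : Set V} (hK : CB K) (u : V) (c : ℝ) : CB (K ∩ {x | inner ℝ u x ≤ c}) :=
  ⟨hK.1.inter_right (isClosed_le_half u c), hK.2.inter (convex_le_half u c)⟩

lemma CB.interGe {K : Set V} (hK : CB K) (u : V) (c : ℝ) : CB (K ∩ {x | c ≤ inner ℝ u x}) :=
  ⟨hK.1.inter_right (isClosed_ge_half u c), hK.2.inter (convex_ge_half u c)⟩

lemma CB.image {W : Type} [NormedAddCommGroup W] [InnerProductSpace ℝ W] {K : Set V} (hK : CB K)
    (A : V →L[ℝ] W) : CB (A '' K) :=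
  ⟨hK.1.image A.continuous, hK.2.linear_image A.toLinearMap⟩

lemma VC.cut {f : Set V → ℝ} (hf : VC f) (hn : NullVal f) : CutVal f := by
  intro K hK u hu c
  have hU : (K ∩ {x | inner ℝ u x ≤ c}) ∪ (K ∩ {x | c ≤ inner ℝ u x}) = K := by
    ext x
    simp only [Set.mem_union, Set.mem_inter_iff, Set.mem_ofPred_eq]
    constructor
    · rintro (h | h) <;> exact h.1
    · intro h
      rcases le_total (inner ℝ u x) c with h' | h'
      · exact Or.inl ⟨h, h'⟩
      · exact Or.inr ⟨h, h'⟩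
  have h1 := hf.union _ _ (hK.interLe u c) (hK.interGe u c) (by rw [hU]; exact hK.2)
  have h2 := hn _ ((hK.interLe u c).inter (hK.interGe u c)) u hu c (by
    rintro x ⟨h, h'⟩
    exact le_antisymm h.2 h'.2)
  rw [hU, h2] at h1
  linarith

/-- a point of `K ∩ L` on a segment joining `K` and `L` -/
lemma exists_mem_inter_segment {K L : Set V} (hK : IsClosed K) (hL : IsClosed L)
    (h : Convex ℝ (K ∪ L)) {k l : V} (hk : k ∈ K) (hl : l ∈ L) :
    ∃ z ∈ segment ℝ k l, z ∈ K ∩ L := by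
  have hseg : segment ℝ k l ⊆ K ∪ L := h.segment_subset (Or.inl hk) (Or.inr hl)
  have hp : IsPreconnected (segment ℝ k l) := (convex_segment k l).isPreconnected
  obtain ⟨z, hz, hz'⟩ := isPreconnected_closed_iff.1 hp K L hK hL hseg
    ⟨k, left_mem_segment ℝ k l, hk⟩ ⟨l, right_mem_segment ℝ k l, hl⟩
  exact ⟨z, hz, hz'⟩

lemma inter_add_of_convex_union {K L M : Set V} (hK : CB K) (hL : CB L) (hM : CB M)
    (h : Convex ℝ (K ∪ L)) : (K ∩ L) + M = (K + M) ∩ (L + M) := by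
  apply Set.Subset.antisymm
  · exact Set.inter_add_subset
  · rintro x ⟨⟨k, hk, m, hm, rfl⟩, ⟨l, hl, m', hm', hx⟩⟩
    obtain ⟨z, ⟨a, b, ha, hb, hab, rfl⟩, hz⟩ :=
      exists_mem_inter_segment hK.1.isClosed hL.1.isClosed h hk hl
    refine ⟨_, hz, a • m + b • m', hM.2 hm hm' ha hb hab, ?_⟩
    have : a • (k + m) + b • (l + m') = k + m := by
      simp only at hx
      rw [hx, ← add_smul, hab, one_smul]
    simp only
    rw [← this]
    module

lemma iInter_add {K : ℕ → Set V} {M : Set V} (hK : ∀ i, CB (K i)) (hanti : Antitone K)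
    (hM : CB M) : (⋂ i, K i) + M = ⋂ i, (K i + M) := by
  apply Set.Subset.antisymm
  · rintro x ⟨k, hk, m, hm, rfl⟩
    refine Set.mem_iInter.2 fun i => ⟨k, Set.mem_iInter.1 hk i, m, hm, rfl⟩
  · intro x hx
    have hM' : IsClosed ((fun l => x - l) ⁻¹' M) := hM.1.isClosed.preimage (by fun_prop)
    obtain ⟨z, hz⟩ := IsCompact.nonempty_iInter_of_sequence_nonempty_isCompact_isClosed
      (fun i => K i ∩ ((fun l => x - l) ⁻¹' M))
      (fun i => Set.inter_subset_inter_left _ (hanti (Nat.le_succ i)))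
      (fun i => by
        obtain ⟨k, hk, m, hm, hx⟩ := Set.mem_iInter.1 hx i
        refine ⟨k, hk, ?_⟩
        simp only at hx
        simpa [← hx] using hm)
      ((hK 0).1.inter_right hM')
      (fun i => (hK i).1.isClosed.inter hM')
    rw [Set.mem_iInter] at hz
    exact ⟨z, Set.mem_iInter.2 fun i => (hz i).1, x - z, (hz 0).2, by simp⟩

lemma VC.add {f g : Set V → ℝ} (hf : VC f) (hg : VC g) : VC (fun K => f K + g K) where
  empty := by simp [hf.empty, hg.empty]
  union K L hK hL h := by
    have := hf.union K L hK hL h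
    have := hg.union K L hK hL h
    linarith
  cont K hK h := (hf.cont K hK h).add (hg.cont K hK h)

lemma VC.const_mul {f : Set V → ℝ} (hf : VC f) (c : ℝ) : VC (fun K => c * f K) where
  empty := by simp [hf.empty]
  union K L hK hL h := by
    have := hf.union K L hK hL h
    rw [← mul_add, ← mul_add, this]
  cont K hK h := (hf.cont K hK h).const_mul c

/-- Euler characteristic -/
def eulerC (K : Set V) : ℝ := by
  classical exact if K.Nonempty then 1 else 0

lemma eulerC_of_nonempty {K : Set V} (h : K.Nonempty) : eulerC K = 1 := by
  simp [eulerC, h]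

lemma eulerC_empty : eulerC (∅ : Set V) = 0 := by
  simp [eulerC]

lemma VC.euler : VC (eulerC : Set V → ℝ) where
  empty := eulerC_empty
  union K L hK hL h := by
    rcases K.eq_empty_or_nonempty with rfl | hKn
    · simp
      ring
    rcases L.eq_empty_or_nonempty with rfl | hLn
    · simp
    obtain ⟨z, _, hz⟩ :=
      exists_mem_inter_segment hK.1.isClosed hL.1.isClosed h hKn.some_mem hLn.some_mem
    rw [eulerC_of_nonempty ⟨z, hz⟩, eulerC_of_nonempty hKn, eulerC_of_nonempty hLn,
      eulerC_of_nonempty (hKn.mono Set.subset_union_left)]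
  cont K hK h := by
    by_cases hne : ∀ i, (K i).Nonempty
    · have := IsCompact.nonempty_iInter_of_sequence_nonempty_isCompact_isClosed K
        (fun i => h (Nat.le_succ i)) hne (hK 0).1 (fun i => (hK i).1.isClosed)
      rw [eulerC_of_nonempty this]
      simp [eulerC_of_nonempty (hne _)]
    · push Not at hne
      obtain ⟨i, hi⟩ := hne
      have h0 : ⋂ i, K i = ∅ := Set.eq_empty_of_subset_empty (hi ▸ Set.iInter_subset K i)
      rw [h0, eulerC_empty]
      apply tendsto_const_nhds.congr'
      filter_upwards [eventually_ge_atTop i] with j hj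
      have : K j = ∅ := Set.eq_empty_of_subset_empty (hi ▸ h hj)
      rw [this, eulerC_empty]

lemma VC.comp_add {f : Set V → ℝ} (hf : VC f) (W : Submodule ℝ V) {M : Set V} (hM : CB M) :
    VC (fun L : Set W => f ((W.subtypeL '' L) + M)) where
  empty := by simp [hf.empty]
  union K L hK hL h := by
    have hc : Convex ℝ (W.subtypeL '' K ∪ W.subtypeL '' L) := by
      rw [← Set.image_union]
      exact h.linear_image W.subtypeL.toLinearMap
    rw [Set.image_union, Set.image_inter (f := W.subtypeL) Subtype.val_injective,
      inter_add_of_convex_union (hK.image _) (hL.image _) hM hc, Set.union_add]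
    apply hf.union _ _ ((hK.image _).add hM) ((hL.image _).add hM)
    rw [← Set.union_add]
    exact hc.add hM.2
  cont K hK h := by
    have hK' : ∀ i, CB (W.subtypeL '' (K i)) := fun i => (hK i).image _
    have ha : Antitone (fun i => W.subtypeL '' (K i)) := fun i j hij => Set.image_mono (h hij)
    have h1 : W.subtypeL '' (⋂ i, K i) = ⋂ i, W.subtypeL '' (K i) :=
      Set.InjOn.image_iInter_eq (Subtype.val_injective.injOn)
    rw [h1, iInter_add hK' ha hM]
    exact hf.cont _ (fun i => (hK' i).add hM) (fun i j hij => Set.add_subset_add_right (ha hij))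

lemma VC.comp_smul {f : Set V → ℝ} (hf : VC f) {c : ℝ} (hc : c ≠ 0) :
    VC (fun L : Set V => f (c • L)) where
  empty := by simp [hf.empty]
  union K L hK hL h := by
    rw [Set.smul_set_union, Set.smul_set_inter₀ hc]
    apply hf.union _ _ (hK.smul c) (hL.smul c)
    rw [← Set.smul_set_union]
    exact h.smul c
  cont K hK h := by
    have h1 : c • (⋂ i, K i) = ⋂ i, c • K i := by
      simp only [← Set.image_smul]
      exact Set.InjOn.image_iInter_eq ((smul_right_injective V hc).injOn)
    rw [h1]
    exact hf.cont _ (fun i => (hK i).smul c) (fun i j hij => Set.smul_set_mono (h hij))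

end basics


/-! ### Dissection into orthoschemes -/

/-- intersection of finitely many half-spaces -/
def hs {V : Type} [NormedAddCommGroup V] [InnerProductSpace ℝ V] (l : List (V × ℝ)) : Set V :=
  {x | ∀ p ∈ l, inner ℝ p.1 x ≤ p.2}

/-- cell where the functional `u` is maximal among `s` -/
def cell {V : Type} [NormedAddCommGroup V] [InnerProductSpace ℝ V] (s : Finset V) (u : V) : Set V :=
  {x | ∀ v ∈ s, (inner ℝ v x : ℝ) ≤ inner ℝ u x}

/-- orthoscheme at the origin -/
def chain {V : Type} [NormedAddCommGroup V] [InnerProductSpace ℝ V] {n : ℕ} (w : Fin n → V) :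
    Set V :=
  {x | ∀ i, 0 ≤ (inner ℝ (w i) x : ℝ) ∧ (inner ℝ (w i) x : ℝ) ≤ 1 ∧
    ∀ j, i ≤ j → (inner ℝ (w j) x : ℝ) ≤ inner ℝ (w i) x}

/-- orthogonal family of nonzero vectors -/
def OrthoFam {V : Type} [NormedAddCommGroup V] [InnerProductSpace ℝ V] {n : ℕ} (w : Fin n → V) :
    Prop := (∀ i, w i ≠ 0) ∧ ∀ i j, i ≠ j → (inner ℝ (w i) (w j) : ℝ) = 0

section sec2
variable {V : Type} [NormedAddCommGroup V] [InnerProductSpace ℝ V]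

lemma isClosed_hs (l : List (V × ℝ)) : IsClosed (hs l) := by
  have : hs l = ⋂ p ∈ l, {x | inner ℝ p.1 x ≤ p.2} := by
    ext x; simp [hs]
  rw [this]
  exact isClosed_biInter fun p _ => isClosed_le_half _ _

lemma convex_hs (l : List (V × ℝ)) : Convex ℝ (hs l) := by
  have : hs l = ⋂ p ∈ l, {x | inner ℝ p.1 x ≤ p.2} := by
    ext x; simp [hs]
  rw [this]
  exact convex_iInter fun p => convex_iInter fun _ => convex_le_half _ _

lemma CB.interCell {K : Set V} (hK : CB K) (s : Finset V) (u : V) : CB (K ∩ cell s u) := by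
  have : cell s u = ⋂ v ∈ s, {x | inner ℝ (v - u) x ≤ 0} := by
    ext x; simp [cell, inner_sub_left]
  rw [this]
  exact ⟨hK.1.inter_right (isClosed_biInter fun p _ => isClosed_le_half _ _),
    hK.2.inter (convex_iInter fun p => convex_iInter fun _ => convex_le_half _ _)⟩

lemma sum_cells {f : Set V → ℝ} (hc : CutVal f) {s : Finset V} (hs : s.Nonempty) :
    ∀ K, CB K → f K = ∑ u ∈ s, f (K ∩ cell s u) := by
  classical
  induction hs using Finset.Nonempty.cons_induction with
  | singleton a =>
    intro K hK
    have : cell {a} a = Set.univ := by ext x; simp [cell]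
    simp [this]
  | cons m s hm hs ih =>
    intro K hK
    rw [Finset.sum_cons, ih (K ∩ cell (Finset.cons m s hm) m) (hK.interCell _ _),
      ← Finset.sum_add_distrib, ih K hK]
    refine Finset.sum_congr rfl fun i hi => ?_
    rw [hc (K ∩ cell s i) (hK.interCell _ _) (m - i)
      (sub_ne_zero.2 (by rintro rfl; exact hm hi)) 0, add_comm]
    congr 2
    · ext x
      simp only [cell, Set.mem_inter_iff, Set.mem_ofPred_eq, Finset.mem_cons, forall_eq_or_imp,
        inner_sub_left, sub_nonneg, le_refl, true_and]
      constructor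
      · rintro ⟨⟨h1, h2⟩, h3⟩
        exact ⟨⟨h1, fun v hv => (h2 v hv).trans h3⟩, h2⟩
      · rintro ⟨⟨h1, h2⟩, h3⟩
        exact ⟨⟨h1, h3⟩, h2 i hi⟩
    · ext x
      simp only [cell, Set.mem_inter_iff, Set.mem_ofPred_eq, Finset.mem_cons, forall_eq_or_imp,
        inner_sub_left, sub_nonpos]
      tauto

/-- pyramid with apex `0` over `w/|w|² + G` -/
def pyr (w : V) (G : Set (ℝ ∙ w)ᗮ) : Set V :=
  {x | x = 0 ∨ ∃ s : ℝ, 0 < s ∧ s ≤ 1 ∧ ∃ g ∈ G, x = s • ((‖w‖ ^ 2)⁻¹ • w + (g : V))}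

lemma inner_perp (w : V) (g : (ℝ ∙ w)ᗮ) : (inner ℝ w (g : V) : ℝ) = 0 :=
  (Submodule.mem_orthogonal_singleton_iff_inner_right).1 g.2

lemma inner_perp' (w : V) (g : (ℝ ∙ w)ᗮ) : (inner ℝ (g : V) w : ℝ) = 0 :=
  (Submodule.mem_orthogonal_singleton_iff_inner_left).1 g.2

lemma inner_pyr {w : V} (hw : w ≠ 0) (s : ℝ) (g : (ℝ ∙ w)ᗮ) :
    (inner ℝ w (s • ((‖w‖ ^ 2)⁻¹ • w + (g : V))) : ℝ) = s := by
  have : ‖w‖ ≠ 0 := norm_ne_zero_iff.2 hw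
  rw [inner_smul_right, inner_add_right, inner_smul_right, inner_perp, real_inner_self_eq_norm_sq]
  field_simp
  simp

lemma inner_pyr' {w : V} (u : (ℝ ∙ w)ᗮ) (s : ℝ) (g : (ℝ ∙ w)ᗮ) :
    (inner ℝ (u : V) (s • ((‖w‖ ^ 2)⁻¹ • w + (g : V))) : ℝ) = s * inner ℝ u g := by
  rw [inner_smul_right, inner_add_right, inner_smul_right, inner_perp']
  simp

lemma CB.pyr {w : V} {G : Set (ℝ ∙ w)ᗮ} (hG : CB G) : CB (pyr w G) := by
  constructor
  · have : _root_.pyr w G = insert 0 ((fun q : ℝ × (ℝ ∙ w)ᗮ => q.1 • ((‖w‖ ^ 2)⁻¹ • w + (q.2 : V))) ''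
        (Set.Icc 0 1 ×ˢ G)) := by
      ext x
      simp only [_root_.pyr, Set.mem_ofPred_eq, Set.mem_insert_iff, Set.mem_image, Prod.exists,
        Set.mem_prod, Set.mem_Icc]
      constructor
      · rintro (h | ⟨s, h0, h1, g, hg, rfl⟩)
        · exact Or.inl h
        · exact Or.inr ⟨s, g, ⟨⟨h0.le, h1⟩, hg⟩, rfl⟩
      · rintro (h | ⟨s, g, ⟨⟨h0, h1⟩, hg⟩, rfl⟩)
        · exact Or.inl h
        · rcases h0.eq_or_lt with rfl | h0
          · left; simp
          · exact Or.inr ⟨s, h0, h1, g, hg, rfl⟩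
    rw [this]
    exact ((isCompact_Icc.prod hG.1).image (by fun_prop)).insert 0
  · rw [convex_iff_forall_pos]
    rintro x (rfl | ⟨s, h0, h1, g, hg, rfl⟩) y (rfl | ⟨t, k0, k1, k, hk, rfl⟩) a b ha hb hab
    · left; simp
    · right
      refine ⟨b * t, by positivity, by nlinarith, k, hk, ?_⟩
      rw [mul_smul]; simp
    · right
      refine ⟨a * s, by positivity, by nlinarith, g, hg, ?_⟩
      rw [mul_smul]; simp
    · right
      have hp : 0 < a * s + b * t := by positivity
      refine ⟨a * s + b * t, hp, by nlinarith, ((a * s) / (a * s + b * t)) • g +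
        ((b * t) / (a * s + b * t)) • k, hG.2 hg hk (by positivity) (by positivity) ?_, ?_⟩
      · field_simp
      · simp only [Submodule.coe_add, Submodule.coe_smul, smul_add, smul_smul]
        rw [mul_div_cancel₀ _ hp.ne', mul_div_cancel₀ _ hp.ne']
        module

lemma pyr_sub_ne {w : V} {u : (ℝ ∙ w)ᗮ} (hu : u ≠ 0) (c : ℝ) : (u : V) - c • w ≠ 0 := by
  intro h
  have : (inner ℝ (u : V) ((u : V) - c • w) : ℝ) = 0 := by rw [h]; simp
  rw [inner_sub_right, inner_smul_right, inner_perp'] at this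
  simp at this
  exact hu this

lemma pyr_cut_inner {w : V} (hw : w ≠ 0) (u : (ℝ ∙ w)ᗮ) (c s : ℝ) (g : (ℝ ∙ w)ᗮ) :
    (inner ℝ ((u : V) - c • w) (s • ((‖w‖ ^ 2)⁻¹ • w + (g : V))) : ℝ) = s * (inner ℝ u g - c) := by
  rw [inner_sub_left, inner_smul_left, inner_pyr hw, inner_pyr']
  simp
  ring

lemma CutVal.pyr {f : Set V → ℝ} (hc : CutVal f) {w : V} (hw : w ≠ 0) :
    CutVal (fun G => f (pyr w G)) := by
  intro G hG u hu c
  dsimp only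
  rw [hc _ hG.pyr ((u : V) - c • w) (pyr_sub_ne hu c) 0]
  congr 2
  · ext x
    constructor
    · rintro ⟨(rfl | ⟨s, h0, h1, g, hg, rfl⟩), h⟩
      · left; rfl
      · right
        refine ⟨s, h0, h1, g, ⟨hg, ?_⟩, rfl⟩
        simp only [Set.mem_ofPred_eq, pyr_cut_inner hw] at h ⊢
        nlinarith
    · rintro (rfl | ⟨s, h0, h1, g, ⟨hg, h⟩, rfl⟩)
      · exact ⟨Or.inl rfl, by simp⟩
      · refine ⟨Or.inr ⟨s, h0, h1, g, hg, rfl⟩, ?_⟩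
        simp only [Set.mem_ofPred_eq, pyr_cut_inner hw] at h ⊢
        nlinarith
  · ext x
    constructor
    · rintro ⟨(rfl | ⟨s, h0, h1, g, hg, rfl⟩), h⟩
      · left; rfl
      · right
        refine ⟨s, h0, h1, g, ⟨hg, ?_⟩, rfl⟩
        simp only [Set.mem_ofPred_eq, pyr_cut_inner hw] at h ⊢
        nlinarith
    · rintro (rfl | ⟨s, h0, h1, g, ⟨hg, h⟩, rfl⟩)
      · exact ⟨Or.inl rfl, by simp⟩
      · refine ⟨Or.inr ⟨s, h0, h1, g, hg, rfl⟩, ?_⟩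
        simp only [Set.mem_ofPred_eq, pyr_cut_inner hw] at h ⊢
        nlinarith

lemma NullVal.pyr {f : Set V → ℝ} (hn : NullVal f) {w : V} (hw : w ≠ 0) :
    NullVal (fun G => f (pyr w G)) := by
  intro G hG u hu c h
  refine hn _ hG.pyr ((u : V) - c • w) (pyr_sub_ne hu c) 0 ?_
  rintro x (rfl | ⟨s, h0, h1, g, hg, rfl⟩)
  · simp
  · have := h hg
    simp only [Set.mem_ofPred_eq, pyr_cut_inner hw] at this ⊢
    rw [this]; simp

lemma OrthoFam.eq_zero [FiniteDimensional ℝ V] {n : ℕ} {w : Fin n → V} (h : OrthoFam w)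
    (hn : Module.finrank ℝ V = n) {x : V} (hx : ∀ i, (inner ℝ (w i) x : ℝ) = 0) : x = 0 := by
  have hli : LinearIndependent ℝ w :=
    linearIndependent_of_ne_zero_of_inner_eq_zero h.1 (fun i j hij => h.2 i j hij)
  have hsp := hli.span_eq_top_of_card_eq_finrank' (by simp [hn])
  have hx' : x ∈ (Submodule.span ℝ (Set.range w))ᗮ := by
    rw [Submodule.mem_orthogonal]
    intro u hu
    induction hu using Submodule.span_induction with
    | mem y hy => obtain ⟨i, rfl⟩ := hy; exact hx i
    | zero => simp
    | add y z _ _ h1 h2 => rw [inner_add_left, h1, h2, add_zero]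
    | smul a y _ h1 => rw [inner_smul_left, h1, mul_zero]
  rw [hsp] at hx'
  simpa using hx'

lemma OrthoFam.cons {n : ℕ} {w : V} (hw : w ≠ 0) {w' : Fin n → (ℝ ∙ w)ᗮ} (h : OrthoFam w') :
    OrthoFam (Fin.cons w (fun i => (w' i : V)) : Fin (n + 1) → V) := by
  constructor
  · intro i
    refine Fin.cases ?_ (fun i => ?_) i
    · simpa using hw
    · simpa using h.1 i
  · intro i j
    refine Fin.cases ?_ (fun i => ?_) i <;> refine Fin.cases ?_ (fun j => ?_) j
    · simp
    · intro _; simpa using inner_perp w (w' j)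
    · intro _; simpa using inner_perp' w (w' i)
    · intro hij
      have := h.2 i j (by rintro rfl; exact hij rfl)
      simpa using this

lemma pyr_chain [FiniteDimensional ℝ V] {n : ℕ} (hn : Module.finrank ℝ V = n + 1) {w : V}
    (hw : w ≠ 0) {w' : Fin n → (ℝ ∙ w)ᗮ} (h : OrthoFam w') :
    pyr w (chain w') = chain (Fin.cons w (fun i => (w' i : V)) : Fin (n + 1) → V) := by
  ext x
  constructor
  · rintro (rfl | ⟨s, h0, h1, g, hg, rfl⟩)
    · intro i; simp
    · intro i
      refine Fin.cases ?_ (fun i => ?_) i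
      · simp only [Fin.cons_zero, inner_pyr hw]
        refine ⟨h0.le, h1, fun j => ?_⟩
        refine Fin.cases ?_ (fun j => ?_) j
        · intro _; simp only [Fin.cons_zero, inner_pyr hw, le_refl]
        · intro _
          simp only [Fin.cons_succ, inner_pyr']
          have := (hg j).2.1
          nlinarith
      · simp only [Fin.cons_succ, inner_pyr']
        obtain ⟨k1, k2, k3⟩ := hg i
        refine ⟨by positivity, by nlinarith, fun j => ?_⟩
        refine Fin.cases ?_ (fun j => ?_) j
        · intro hj; simp at hj
        · intro hj
          simp only [Fin.cons_succ, inner_pyr']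
          have := k3 j (by simpa using hj)
          nlinarith
  · intro hx
    obtain ⟨k1, k2, k3⟩ := hx 0
    simp only [Fin.cons_zero] at k1 k2 k3
    rcases k1.eq_or_lt with k1 | k1
    · left
      refine (OrthoFam.cons hw h).eq_zero hn (fun i => ?_)
      refine Fin.cases ?_ (fun i => ?_) i
      · simpa using k1.symm
      · have a1 := (hx i.succ).1
        have a2 := k3 i.succ (Fin.zero_le _)
        linarith
    · right
      set t : ℝ := inner ℝ w x with ht
      have hw2 : ‖w‖ ≠ 0 := norm_ne_zero_iff.2 hw
      have hg : t⁻¹ • x - (‖w‖ ^ 2)⁻¹ • w ∈ (ℝ ∙ w)ᗮ := by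
        rw [Submodule.mem_orthogonal_singleton_iff_inner_right, inner_sub_right, inner_smul_right,
          inner_smul_right, real_inner_self_eq_norm_sq, ← ht]
        field_simp
        simp
      have hxe : x = t • ((‖w‖ ^ 2)⁻¹ • w + ((⟨_, hg⟩ : (ℝ ∙ w)ᗮ) : V)) := by
        simp [smul_smul, mul_inv_cancel₀ k1.ne']
      refine ⟨t, k1, k2, ⟨_, hg⟩, ?_, hxe⟩
      intro i
      have key : ∀ i, (inner ℝ (w' i : V) x : ℝ) = t * inner ℝ (w' i) (⟨_, hg⟩ : (ℝ ∙ w)ᗮ) := by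
        intro i
        conv_lhs => rw [hxe]
        rw [inner_pyr']
      have b1 := hx i.succ
      simp only [Fin.cons_succ, key] at b1
      refine ⟨?_, ?_, fun j hj => ?_⟩
      · exact nonneg_of_mul_nonneg_right b1.1 k1
      · have := k3 i.succ (Fin.zero_le _)
        simp only [Fin.cons_succ, key] at this
        nlinarith
      · have := b1.2.2 j.succ (by simpa using hj)
        simp only [Fin.cons_succ, key] at this
        exact le_of_mul_le_mul_left this k1

end sec2


section sec3
variable {V : Type} [NormedAddCommGroup V] [InnerProductSpace ℝ V]

lemma exists_box [FiniteDimensional ℝ V] (R : ℝ) (hR : 0 ≤ R) :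
    ∃ l : List (V × ℝ), IsCompact (hs l) ∧ (∀ p ∈ l, 0 ≤ p.2) ∧ Metric.closedBall 0 R ⊆ hs l := by
  let b := stdOrthonormalBasis ℝ V
  refine ⟨(List.finRange _).map (fun i => (b i, R)) ++ (List.finRange _).map (fun i => (-b i, R)),
    ?_, ?_, ?_⟩
  · refine Metric.isCompact_of_isClosed_isBounded (isClosed_hs _) ?_
    refine (Metric.isBounded_iff_subset_closedBall 0).2 ⟨∑ i : Fin (Module.finrank ℝ V), R, ?_⟩
    intro x hx
    rw [mem_closedBall_zero_iff]
    conv_lhs => rw [← b.sum_repr' x]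
    refine (norm_sum_le _ _).trans (Finset.sum_le_sum fun i _ => ?_)
    rw [norm_smul, b.norm_eq_one, mul_one, Real.norm_eq_abs, abs_le]
    have h1 := hx (b i, R) (by simp)
    have h2 := hx (-b i, R) (by simp)
    simp only [inner_neg_left] at h1 h2
    constructor <;> linarith
  · intro p hp
    simp only [List.mem_append, List.mem_map] at hp
    rcases hp with ⟨i, _, rfl⟩ | ⟨i, _, rfl⟩ <;> exact hR
  · intro x hx p hp
    rw [mem_closedBall_zero_iff] at hx
    have hn : ‖p.1‖ ≤ 1 ∧ p.2 = R := by
      simp only [List.mem_append, List.mem_map] at hp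
      rcases hp with ⟨i, _, rfl⟩ | ⟨i, _, rfl⟩ <;> simp
    rw [hn.2]
    calc inner ℝ p.1 x ≤ ‖p.1‖ * ‖x‖ := real_inner_le_norm _ _
      _ ≤ 1 * ‖x‖ := by gcongr; exact hn.1
      _ ≤ R := by simpa using hx

lemma eq_zero_of_ray {P : Set V} (hP : IsCompact P) {x : V} (h : ∀ t : ℝ, 0 ≤ t → t • x ∈ P) :
    x = 0 := by
  by_contra hx
  obtain ⟨R, hR⟩ := (Metric.isBounded_iff_subset_closedBall 0).1 hP.isBounded
  have hpos : 0 < ‖x‖ := norm_pos_iff.2 hx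
  have h1 := hR (h ((|R| + 1) / ‖x‖) (by positivity))
  rw [mem_closedBall_zero_iff, norm_smul, Real.norm_eq_abs, abs_of_nonneg (by positivity)] at h1
  rw [div_mul_cancel₀ _ hpos.ne'] at h1
  have := le_abs_self R
  linarith

lemma ortho_vanish_zero_mem [FiniteDimensional ℝ V] {n : ℕ} (hn : Module.finrank ℝ V = n + 1)
    (ih : ∀ (W : Type) [NormedAddCommGroup W] [InnerProductSpace ℝ W] [FiniteDimensional ℝ W],
      Module.finrank ℝ W = n → ∀ f : Set W → ℝ, f ∅ = 0 → CutVal f → NullVal f →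
      (∀ w : Fin n → W, OrthoFam w → f (chain w) = 0) →
      ∀ l : List (W × ℝ), IsCompact (hs l) → f (hs l) = 0)
    (f : Set V → ℝ) (hc : CutVal f) (hnull : NullVal f)
    (hf : ∀ w : Fin (n + 1) → V, OrthoFam w → f (chain w) = 0)
    (l : List (V × ℝ)) (hl : IsCompact (hs l)) (h0 : ∀ p ∈ l, 0 ≤ p.2) : f (hs l) = 0 := by
  classical
  have hCB : CB (hs l) := ⟨hl, convex_hs l⟩
  have hnt : Nontrivial V := Module.nontrivial_of_finrank_pos (R := ℝ) (by omega)
  obtain ⟨u0, hu0⟩ := exists_ne (0 : V)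
  have hzero : ∀ K : Set V, CB K → K ⊆ {0} → f K = 0 := by
    intro K hK h
    refine hnull K hK u0 hu0 0 (h.trans ?_)
    simp
  let s : Finset V := ((l.filter (fun p => 0 < p.2)).map (fun p => (p.2)⁻¹ • p.1)).toFinset
  have hmem : ∀ v, v ∈ s ↔ ∃ p ∈ l, 0 < p.2 ∧ (p.2)⁻¹ • p.1 = v := by
    intro v; simp [s, and_assoc]
  -- membership in `hs l` in terms of `s`
  have hhs : ∀ x, (∀ p ∈ l, p.2 = 0 → (inner ℝ p.1 x : ℝ) ≤ 0) →
      (∀ v ∈ s, (inner ℝ v x : ℝ) ≤ 1) → x ∈ hs l := by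
    intro x h1 h2 p hp
    rcases (h0 p hp).eq_or_lt with h | h
    · rw [← h]; exact h1 p hp h.symm
    · have := h2 _ ((hmem _).2 ⟨p, hp, h, rfl⟩)
      rw [inner_smul_left] at this
      simp only [map_inv₀, RCLike.conj_to_real] at this
      rwa [inv_mul_le_iff₀ h, mul_one] at this
  have hhs1 : ∀ x ∈ hs l, ∀ p ∈ l, p.2 = 0 → (inner ℝ p.1 x : ℝ) ≤ 0 := by
    intro x hx p hp h
    have := hx p hp
    rwa [h] at this
  have hhs2 : ∀ x ∈ hs l, ∀ v ∈ s, (inner ℝ v x : ℝ) ≤ 1 := by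
    intro x hx v hv
    obtain ⟨p, hp, h, rfl⟩ := (hmem v).1 hv
    rw [inner_smul_left]
    simp only [map_inv₀, RCLike.conj_to_real]
    rw [inv_mul_le_iff₀ h, mul_one]
    exact hx p hp
  have hray : ∀ x ∈ hs l, (∀ v ∈ s, (inner ℝ v x : ℝ) ≤ 0) → x = 0 := by
    intro x hx h
    refine eq_zero_of_ray hl fun t ht => hhs _ ?_ ?_
    · intro p hp hp0
      rw [inner_smul_right]
      exact mul_nonpos_of_nonneg_of_nonpos ht (hhs1 x hx p hp hp0)
    · intro v hv
      rw [inner_smul_right]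
      exact (mul_nonpos_of_nonneg_of_nonpos ht (h v hv)).trans zero_le_one
  rcases s.eq_empty_or_nonempty with hs0 | hsne
  · refine hzero _ hCB fun x hx => hray x hx ?_
    simp [hs0]
  rw [sum_cells hc hsne _ hCB]
  refine Finset.sum_eq_zero fun w hw => ?_
  by_cases hw0 : w = 0
  · refine hzero _ (hCB.interCell _ _) ?_
    rintro x ⟨hx, hx'⟩
    refine hray x hx fun v hv => ?_
    have := hx' v hv
    simpa [hw0] using this
  have hw2 : ‖w‖ ≠ 0 := norm_ne_zero_iff.2 hw0
  let p0 : V := (‖w‖ ^ 2)⁻¹ • w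
  let l' : List ((ℝ ∙ w)ᗮ × ℝ) :=
    l.map (fun p => ((ℝ ∙ w)ᗮ.orthogonalProjection p.1, p.2 - inner ℝ p.1 p0))
  have hl' : ∀ g : (ℝ ∙ w)ᗮ, g ∈ hs l' ↔ p0 + (g : V) ∈ hs l := by
    intro g
    simp only [hs, l', List.mem_map, Set.mem_ofPred_eq, forall_exists_index, and_imp,
      forall_apply_eq_imp_iff₂]
    refine forall₂_congr fun p hp => ?_
    rw [inner_add_right, Submodule.inner_orthogonalProjection_eq_of_mem_right, le_sub_iff_add_le']
  have hl'c : IsCompact (hs l') := by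
    have : hs l' = (fun g : (ℝ ∙ w)ᗮ => p0 + (g : V)) ⁻¹' (hs l) := by
      ext g; exact hl' g
    rw [this]
    refine Topology.IsClosedEmbedding.isCompact_preimage ?_ hl
    exact (Homeomorph.addLeft p0).isClosedEmbedding.comp
      (Submodule.closed_of_finiteDimensional _).isClosedEmbedding_subtypeVal
  have hcell : hs l ∩ cell s w = pyr w (hs l') := by
    ext x
    constructor
    · rintro ⟨hx, hx'⟩
      by_cases hpos : (inner ℝ w x : ℝ) ≤ 0
      · left
        exact hray x hx fun v hv => (hx' v hv).trans hpos
      · push Not at hpos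
        right
        set t : ℝ := inner ℝ w x with ht
        have hg : t⁻¹ • x - p0 ∈ (ℝ ∙ w)ᗮ := by
          rw [Submodule.mem_orthogonal_singleton_iff_inner_right, inner_sub_right,
            inner_smul_right, inner_smul_right, real_inner_self_eq_norm_sq, ← ht]
          field_simp
          simp
        refine ⟨t, hpos, hhs2 x hx w hw, ⟨_, hg⟩, ?_, ?_⟩
        · rw [hl']
          simp only [add_sub_cancel]
          refine hhs _ ?_ ?_
          · intro p hp hp0
            rw [inner_smul_right]
            exact mul_nonpos_of_nonneg_of_nonpos (by positivity) (hhs1 x hx p hp hp0)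
          · intro v hv
            rw [inner_smul_right, inv_mul_le_iff₀ hpos, mul_one]
            exact hx' v hv
        · simp [p0, smul_smul, mul_inv_cancel₀ hpos.ne']
    · rintro (rfl | ⟨t, k0, k1, g, hg, rfl⟩)
      · refine ⟨?_, ?_⟩
        · intro p hp; simpa using h0 p hp
        · intro v hv; simp
      · rw [hl'] at hg
        refine ⟨hhs _ ?_ ?_, ?_⟩
        · intro p hp hp0
          rw [inner_smul_right]
          exact mul_nonpos_of_nonneg_of_nonpos k0.le (hhs1 _ hg p hp hp0)
        · intro v hv
          rw [inner_smul_right]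
          have := hhs2 _ hg v hv
          simp only [p0] at this
          nlinarith
        · intro v hv
          rw [inner_pyr hw0, inner_smul_right]
          have := hhs2 _ hg v hv
          simp only [p0] at this
          nlinarith
  rw [hcell]
  haveI : Fact (Module.finrank ℝ V = n + 1) := ⟨hn⟩
  refine ih (ℝ ∙ w)ᗮ (Submodule.finrank_orthogonal_span_singleton hw0) (fun G => f (pyr w G)) ?_
    (hc.pyr hw0) (hnull.pyr hw0) ?_ l' hl'c
  · exact hzero _ CB.empty.pyr (by rintro x (h | ⟨_, _, _, _, h, _⟩); exacts [h, h.elim])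
  · intro w' hw'
    rw [pyr_chain hn hw0 hw']
    exact hf _ (OrthoFam.cons hw0 hw')

end sec3

theorem ortho_vanish : ∀ (n : ℕ) (V : Type) [NormedAddCommGroup V] [InnerProductSpace ℝ V]
    [FiniteDimensional ℝ V], Module.finrank ℝ V = n → ∀ f : Set V → ℝ, f ∅ = 0 → CutVal f →
    NullVal f → (∀ w : Fin n → V, OrthoFam w → f (chain w) = 0) →
    ∀ l : List (V × ℝ), IsCompact (hs l) → f (hs l) = 0 := by
  intro n
  induction n with
  | zero =>
    intro V _ _ _ hn f h0 hc hnull hf l hl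
    have hsub : Subsingleton V := Module.finrank_zero_iff.1 hn
    rcases (hs l).eq_empty_or_nonempty with h | h
    · rw [h, h0]
    · have h1 : hs l = Set.univ := Subsingleton.eq_univ_of_nonempty h
      have h2 : chain (Fin.elim0 : Fin 0 → V) = Set.univ := by
        ext x; simp [chain]
      rw [h1, ← h2]
      exact hf _ ⟨fun i => i.elim0, fun i => i.elim0⟩
  | succ n ih =>
    intro V _ _ _ hn f h0 hc hnull hf l hl
    have key : ∀ l' l : List (V × ℝ), IsCompact (hs l) → (∀ p ∈ l, 0 ≤ p.2) →
        f (hs l ∩ hs l') = 0 := by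
      intro l'
      induction l' with
      | nil =>
        intro l hl h
        have : hs ([] : List (V × ℝ)) = Set.univ := by ext x; simp [hs]
        rw [this, Set.inter_univ]
        exact ortho_vanish_zero_mem hn ih f hc hnull hf l hl h
      | cons p l' ihl =>
        intro l hl h
        have hcons : ∀ (q : V × ℝ) (l : List (V × ℝ)),
            hs (q :: l) = hs l ∩ {x | inner ℝ q.1 x ≤ q.2} := by
          intro q l
          ext x
          simp only [hs, List.mem_cons, forall_eq_or_imp, Set.mem_ofPred_eq, Set.mem_inter_iff]
          tauto
        have hcpt : ∀ q : V × ℝ, IsCompact (hs (q :: l)) := by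
          intro q
          rw [hcons]
          exact hl.inter_right (isClosed_le_half _ _)
        rcases le_or_gt 0 p.2 with hp | hp
        · have := ihl (p :: l) (hcpt p) (by
            intro q hq
            rcases List.mem_cons.1 hq with rfl | hq
            exacts [hp, h q hq])
          rw [← this, hcons, hcons]
          congr 1
          ext x; simp only [Set.mem_inter_iff]; tauto
        · by_cases hp0 : p.1 = 0
          · have : hs l ∩ hs (p :: l') = ∅ := by
              rw [hcons, hp0]
              ext x
              simp [hp]
            rw [this, h0]
          · have h1 := hc (hs l ∩ hs l') ⟨hl.inter_right (isClosed_hs _),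
              (convex_hs _).inter (convex_hs _)⟩ p.1 hp0 p.2
            rw [ihl l hl h] at h1
            have h2 := ihl ((-p.1, -p.2) :: l) (hcpt _) (by
              intro q hq
              rcases List.mem_cons.1 hq with rfl | hq
              · simp only; linarith
              · exact h q hq)
            have h3 : hs ((-p.1, -p.2) :: l) ∩ hs l' = hs l ∩ hs l' ∩ {x | p.2 ≤ inner ℝ p.1 x} := by
              rw [hcons]
              ext x
              simp only [Set.mem_inter_iff, Set.mem_ofPred_eq, inner_neg_left, neg_le_neg_iff]
              tauto
            rw [← h3, h2] at h1
            rw [hcons, ← Set.inter_assoc]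
            linarith
    obtain ⟨R, hR⟩ := (Metric.isBounded_iff_subset_closedBall 0).1 hl.isBounded
    obtain ⟨l0, hl0, hl0', hl0b⟩ := exists_box (V := V) |R| (abs_nonneg R)
    have : hs l = hs l0 ∩ hs l := by
      rw [eq_comm, Set.inter_eq_right]
      exact (hR.trans (Metric.closedBall_subset_closedBall (le_abs_self R))).trans hl0b
    rw [this]
    exact key l l0 hl0 hl0'

/-- outer approximation by polytopes -/
lemma exists_polytopes {V : Type} [NormedAddCommGroup V] [InnerProductSpace ℝ V]
    [FiniteDimensional ℝ V] {K : Set V} (hK : CB K) :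
    ∃ l : ℕ → List (V × ℝ), (∀ i, IsCompact (hs (l i))) ∧ Antitone (fun i => hs (l i)) ∧
      ⋂ i, hs (l i) = K := by
  classical
  -- half-spaces containing `K`
  let I := {p : V × ℝ // K ⊆ {x | inner ℝ p.1 x ≤ p.2}}
  let s : I → Set V := fun p => {x | inner ℝ p.1.1 x ≤ p.1.2}ᶜ
  obtain ⟨T, hTc, hT⟩ := TopologicalSpace.isOpen_iUnion_countable s
    (fun p => (isClosed_le_half _ _).isOpen_compl)
  have hTu : ⋃ p ∈ T, s p = Kᶜ := by
    rw [hT]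
    apply Set.Subset.antisymm
    · exact Set.iUnion_subset fun p => Set.compl_subset_compl.2 p.2
    · intro x hx
      obtain ⟨g, u, h1, h2⟩ := geometric_hahn_banach_closed_point hK.2 hK.1.isClosed hx
      let v := (InnerProductSpace.toDual ℝ V).symm g
      have hv : ∀ y, inner ℝ v y = g y := fun y => InnerProductSpace.toDual_symm_apply
      refine Set.mem_iUnion.2 ⟨⟨(v, u), fun y hy => ?_⟩, ?_⟩
      · simp only [Set.mem_ofPred_eq, hv]; exact (h1 y hy).le
      · simp only [s, Set.mem_compl_iff, Set.mem_ofPred_eq, hv, not_le]; exact h2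
  obtain ⟨R, hR⟩ := (Metric.isBounded_iff_subset_closedBall 0).1 hK.1.isBounded
  obtain ⟨l0, hl0, hl0', hl0b⟩ := exists_box (V := V) |R| (abs_nonneg R)
  have hKl0 : K ⊆ hs l0 :=
    (hR.trans (Metric.closedBall_subset_closedBall (le_abs_self R))).trans hl0b
  let T' : Set (V × ℝ) := insert (0, 0) (Subtype.val '' T)
  have hT'c : T'.Countable := (hTc.image _).insert _
  obtain ⟨e, he⟩ := hT'c.exists_eq_range ⟨(0, 0), Set.mem_insert _ _⟩
  have heK : ∀ i, K ⊆ {x | inner ℝ (e i).1 x ≤ (e i).2} := by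
    intro i
    have : e i ∈ T' := he ▸ Set.mem_range_self i
    rcases this with h | ⟨p, hp, h⟩
    · rw [h]; intro x _; simp
    · rw [← h]; exact p.2
  have hmem : ∀ n x, x ∈ hs (l0 ++ (List.range n).map e) ↔
      x ∈ hs l0 ∧ ∀ i < n, inner ℝ (e i).1 x ≤ (e i).2 := by
    intro n x
    simp only [hs, List.mem_append, List.mem_map, List.mem_range, Set.mem_ofPred_eq]
    constructor
    · intro h
      exact ⟨fun p hp => h p (Or.inl hp), fun i hi => h _ (Or.inr ⟨i, hi, rfl⟩)⟩
    · rintro ⟨h1, h2⟩ p (hp | ⟨i, hi, rfl⟩)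
      exacts [h1 p hp, h2 i hi]
  refine ⟨fun n => l0 ++ (List.range n).map e, ?_, ?_, ?_⟩
  · intro n
    refine hl0.of_isClosed_subset (isClosed_hs _) fun x hx => ((hmem n x).1 hx).1
  · intro m n hmn x hx
    rw [hmem] at hx ⊢
    exact ⟨hx.1, fun i hi => hx.2 i (hi.trans_le hmn)⟩
  · apply Set.Subset.antisymm
    · intro x hx
      by_contra hxK
      have : x ∈ ⋃ p ∈ T, s p := by rw [hTu]; exact hxK
      obtain ⟨p, hpT, hp⟩ := Set.mem_iUnion₂.1 this
      have hpe : p.1 ∈ T' := Set.mem_insert_of_mem _ ⟨p, hpT, rfl⟩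
      rw [he] at hpe
      obtain ⟨i, hi⟩ := hpe
      have h1 := ((hmem _ x).1 (Set.mem_iInter.1 hx (i + 1))).2 i (Nat.lt_succ_self i)
      rw [hi] at h1
      exact hp h1
    · refine Set.subset_iInter fun n x hx => (hmem n x).2 ⟨hKl0 hx, fun i _ => heK i hx⟩

theorem ortho_vanish_all {V : Type} [NormedAddCommGroup V] [InnerProductSpace ℝ V]
    [FiniteDimensional ℝ V] {n : ℕ} (hn : Module.finrank ℝ V = n) {f : Set V → ℝ} (hf : VC f)
    (hnull : NullVal f) (h : ∀ w : Fin n → V, OrthoFam w → f (chain w) = 0) {K : Set V}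
    (hK : CB K) : f K = 0 := by
  obtain ⟨l, h1, h2, h3⟩ := exists_polytopes hK
  have h4 := hf.cont (fun i => hs (l i)) (fun i => ⟨h1 i, convex_hs _⟩) h2
  rw [h3] at h4
  have h5 : ∀ i, f (hs (l i)) = 0 := fun i =>
    ortho_vanish n V hn f hf.empty (hf.cut hnull) hnull h (l i) (h1 i)
  simp only [h5] at h4
  exact tendsto_nhds_unique h4 tendsto_const_nhds |>.symm ▸ rfl


/-- vanishing on orthogonal direct sums -/
def OrthSumVanish {V : Type} [NormedAddCommGroup V] [InnerProductSpace ℝ V] (f : Set V → ℝ) :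
    Prop := ∀ W : Submodule ℝ V, W ≠ ⊥ → W ≠ ⊤ → ∀ L₁ L₂ : Set V, CB L₁ → CB L₂ →
      L₁ ⊆ W → L₂ ⊆ (Wᗮ : Submodule ℝ V) → f (L₁ + L₂) = 0

section sec4
variable {V : Type} [NormedAddCommGroup V] [InnerProductSpace ℝ V] [FiniteDimensional ℝ V]

lemma mem_singleton_add {v x : V} {K : Set V} : x ∈ ({v} : Set V) + K ↔ x - v ∈ K := by
  rw [Set.singleton_add]
  constructor
  · rintro ⟨y, hy, rfl⟩; simpa using hy
  · intro h; exact ⟨x - v, h, by simp⟩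

/-- pieces of the doubled orthoscheme -/
def dblR {n : ℕ} (w : Fin n → V) (j : ℕ) : Set V :=
  {x | ∀ i, 0 ≤ (inner ℝ (w i) x : ℝ) ∧ (inner ℝ (w i) x : ℝ) ≤ 2 ∧
    (∀ k, i ≤ k → (inner ℝ (w k) x : ℝ) ≤ inner ℝ (w i) x) ∧
    ((i : ℕ) < j → 1 ≤ (inner ℝ (w i) x : ℝ))}

/-- pieces of the doubled orthoscheme -/
def dblP {n : ℕ} (w : Fin n → V) (j : ℕ) : Set V :=
  dblR w j ∩ {x | ∀ i : Fin n, j ≤ (i : ℕ) → (inner ℝ (w i) x : ℝ) ≤ 1}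

lemma isCompact_slab {n : ℕ} (hn : Module.finrank ℝ V = n) {w : Fin n → V} (hw : OrthoFam w) :
    IsCompact {x | ∀ i, 0 ≤ (inner ℝ (w i) x : ℝ) ∧ (inner ℝ (w i) x : ℝ) ≤ 2} := by
  let T : V →ₗ[ℝ] (Fin n → ℝ) := LinearMap.pi fun i => (innerₗ V (w i))
  have hT : Topology.IsClosedEmbedding T := by
    apply LinearMap.isClosedEmbedding_of_injective
    rw [LinearMap.ker_eq_bot']
    intro x hx
    exact hw.eq_zero hn fun i => congrFun hx i
  have := hT.isCompact_preimage (isCompact_univ_pi (fun _ : Fin n => isCompact_Icc (a := (0:ℝ)) (b := 2)))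
  convert this using 1
  ext x
  exact ⟨fun h i _ => h i, fun h i => h i trivial⟩

lemma CB.dblR {n : ℕ} (hn : Module.finrank ℝ V = n) {w : Fin n → V} (hw : OrthoFam w) (j : ℕ) :
    CB (dblR w j) := by
  have h : _root_.dblR w j = ⋂ i, ({x | 0 ≤ (inner ℝ (w i) x : ℝ)} ∩ ({x | (inner ℝ (w i) x : ℝ) ≤ 2} ∩
      ((⋂ k, ⋂ (_ : i ≤ k), {x | (inner ℝ (w k - w i) x : ℝ) ≤ 0}) ∩
      ⋂ (_ : (i : ℕ) < j), {x | 1 ≤ (inner ℝ (w i) x : ℝ)}))) := by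
    ext x
    simp only [_root_.dblR, Set.mem_ofPred_eq, Set.mem_iInter, Set.mem_inter_iff, inner_sub_left,
      sub_nonpos]
  constructor
  · refine (isCompact_slab hn hw).of_isClosed_subset ?_ fun x hx i => ⟨(hx i).1, (hx i).2.1⟩
    rw [h]
    exact isClosed_iInter fun i => (isClosed_ge_half _ _).inter ((isClosed_le_half _ _).inter
      ((isClosed_iInter fun k => isClosed_iInter fun _ => isClosed_le_half _ _).inter
      (isClosed_iInter fun _ => isClosed_ge_half _ _)))
  · rw [h]
    exact convex_iInter fun i => (convex_ge_half _ _).inter ((convex_le_half _ _).inter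
      ((convex_iInter fun k => convex_iInter fun _ => convex_le_half _ _).inter
      (convex_iInter fun _ => convex_ge_half _ _)))

lemma CB.dblP {n : ℕ} (hn : Module.finrank ℝ V = n) {w : Fin n → V} (hw : OrthoFam w) (j : ℕ) :
    CB (dblP w j) := by
  have : {x : V | ∀ i : Fin n, j ≤ (i : ℕ) → (inner ℝ (w i) x : ℝ) ≤ 1} =
      ⋂ i : Fin n, ⋂ (_ : j ≤ (i : ℕ)), {x | (inner ℝ (w i) x : ℝ) ≤ 1} := by
    ext x; simp
  unfold _root_.dblP
  rw [this]
  exact ⟨(CB.dblR hn hw j).1.inter_right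
    (isClosed_iInter fun k => isClosed_iInter fun _ => isClosed_le_half _ _),
    (CB.dblR hn hw j).2.inter (convex_iInter fun k => convex_iInter fun _ => convex_le_half _ _)⟩

lemma dblP_zero {n : ℕ} (w : Fin n → V) : dblP w 0 = chain w := by
  ext x
  simp only [dblP, dblR, chain, Set.mem_inter_iff, Set.mem_ofPred_eq]
  constructor
  · intro h i; exact ⟨(h.1 i).1, h.2 i (Nat.zero_le _), (h.1 i).2.2.1⟩
  · intro h
    exact ⟨fun i => ⟨(h i).1, (h i).2.1.trans (by norm_num), (h i).2.2,
      fun h => absurd h (Nat.not_lt_zero _)⟩, fun i _ => (h i).2.1⟩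

lemma dblR_zero {n : ℕ} (w : Fin n → V) : dblR w 0 = (2:ℝ) • chain w := by
  ext x
  rw [Set.mem_smul_set_iff_inv_smul_mem₀ (by norm_num)]
  simp only [dblR, chain, Set.mem_ofPred_eq, inner_smul_right]
  refine forall_congr' fun i => ?_
  constructor
  · rintro ⟨a, b, c, -⟩
    exact ⟨by linarith, by linarith, fun j hj => by linarith [c j hj]⟩
  · rintro ⟨a, b, c⟩
    exact ⟨by linarith, by linarith, fun j hj => by linarith [c j hj],
      fun h => absurd h (Nat.not_lt_zero _)⟩

lemma dblR_last {n : ℕ} {w : Fin n → V} (hw : OrthoFam w) :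
    ∃ v : V, dblR w n = {v} + chain w := by
  refine ⟨∑ i, (‖w i‖ ^ 2)⁻¹ • w i, ?_⟩
  have hv : ∀ i, (inner ℝ (w i) (∑ i, (‖w i‖ ^ 2)⁻¹ • w i) : ℝ) = 1 := by
    intro i
    rw [inner_sum, Finset.sum_eq_single i]
    · rw [inner_smul_right, real_inner_self_eq_norm_sq]
      have : ‖w i‖ ≠ 0 := norm_ne_zero_iff.2 (hw.1 i)
      field_simp
    · intro j _ hj
      rw [inner_smul_right, hw.2 i j hj.symm, mul_zero]
    · simp
  ext x
  rw [mem_singleton_add]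
  simp only [dblR, chain, Set.mem_ofPred_eq, inner_sub_right, hv]
  refine forall_congr' fun i => ?_
  constructor
  · rintro ⟨a, b, c, d⟩
    exact ⟨by linarith [d i.2], by linarith, fun j hj => by linarith [c j hj]⟩
  · rintro ⟨a, b, c⟩
    exact ⟨by linarith, by linarith, fun j hj => by linarith [c j hj], fun _ => by linarith⟩

lemma dbl_cut {n : ℕ} (hn : Module.finrank ℝ V = n) {w : Fin n → V} (hw : OrthoFam w)
    {f : Set V → ℝ} (hc : CutVal f) {j : ℕ} (hj : j < n) :
    f (dblR w j) = f (dblP w j) + f (dblR w (j + 1)) := by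
  rw [hc _ (CB.dblR hn hw j) (w ⟨j, hj⟩) (hw.1 _) 1]
  congr 2
  · ext x
    simp only [dblP, Set.mem_inter_iff, Set.mem_ofPred_eq]
    refine and_congr_right fun h => ⟨fun h1 i hi => ?_, fun h1 => h1 ⟨j, hj⟩ le_rfl⟩
    exact ((h ⟨j, hj⟩).2.2.1 i hi).trans h1
  · ext x
    simp only [dblR, Set.mem_inter_iff, Set.mem_ofPred_eq]
    constructor
    · rintro ⟨h, h1⟩ i
      refine ⟨(h i).1, (h i).2.1, (h i).2.2.1, fun hi => ?_⟩
      exact h1.trans ((h i).2.2.1 ⟨j, hj⟩ (Nat.lt_succ_iff.1 hi))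
    · intro h
      exact ⟨fun i => ⟨(h i).1, (h i).2.1, (h i).2.2.1, fun hi => (h i).2.2.2 (by omega)⟩,
        (h ⟨j, hj⟩).2.2.2 (by simp)⟩

lemma dblP_vanish {n : ℕ} (hn : Module.finrank ℝ V = n) {w : Fin n → V} (hw : OrthoFam w)
    {f : Set V → ℝ} (hf : OrthSumVanish f) {j : ℕ} (h0 : 0 < j) (hj : j < n) :
    f (dblP w j) = 0 := by
  let W : Submodule ℝ V := Submodule.span ℝ (w '' {i : Fin n | (i : ℕ) < j})
  have hin : ∀ i : Fin n, (i : ℕ) < j → w i ∈ W := fun i hi => Submodule.subset_span ⟨i, hi, rfl⟩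
  have hperp : ∀ i : Fin n, j ≤ (i : ℕ) → w i ∈ Wᗮ := by
    intro i hi
    rw [Submodule.mem_orthogonal]
    intro u hu
    induction hu using Submodule.span_induction with
    | mem x hx =>
      obtain ⟨k, hk, rfl⟩ := hx
      refine hw.2 k i fun h => ?_
      subst h
      exact absurd hk (not_lt.2 hi)
    | zero => simp
    | add x y _ _ hx hy => rw [inner_add_left, hx, hy, add_zero]
    | smul a x _ hx => rw [inner_smul_left, hx, mul_zero]
  have hp1 : ∀ x (i : Fin n), (i : ℕ) < j → (inner ℝ (w i) (W.starProjection x) : ℝ) = inner ℝ (w i) x := by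
    intro x i hi
    rw [← Submodule.inner_starProjection_left_eq_right, Submodule.starProjection_eq_self_iff.2 (hin i hi)]
  have hp2 : ∀ x (i : Fin n), j ≤ (i : ℕ) → (inner ℝ (w i) (W.starProjection x) : ℝ) = 0 := by
    intro x i hi
    exact Submodule.inner_left_of_mem_orthogonal (Submodule.starProjection_apply_mem W x) (hperp i hi)
  have hx : ∀ x, x - W.starProjection x ∈ Wᗮ := fun x => W.sub_starProjection_mem_orthogonal x
  let A : V →L[ℝ] V := W.starProjection
  let B : V →L[ℝ] V := ContinuousLinearMap.id ℝ V - W.starProjection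
  have hP := CB.dblP hn hw j
  have : dblP w j = A '' dblP w j + B '' dblP w j := by
    apply Set.Subset.antisymm
    · intro x hx
      exact ⟨A x, ⟨x, hx, rfl⟩, B x, ⟨x, hx, rfl⟩, by simp [A, B]⟩
    · rintro _ ⟨_, ⟨x, hx, rfl⟩, _, ⟨x', hx', rfl⟩, rfl⟩
      have e1 : ∀ i : Fin n, (i : ℕ) < j → (inner ℝ (w i) (A x + B x') : ℝ) = inner ℝ (w i) x := by
        intro i hi
        simp only [A, B, inner_add_right, sub_apply, inner_sub_right,
          ContinuousLinearMap.id_apply, hp1 _ i hi]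
        ring
      have e2 : ∀ i : Fin n, j ≤ (i : ℕ) → (inner ℝ (w i) (A x + B x') : ℝ) = inner ℝ (w i) x' := by
        intro i hi
        simp only [A, B, inner_add_right, sub_apply, inner_sub_right,
          ContinuousLinearMap.id_apply, hp2 _ i hi]
        ring
      refine ⟨fun i => ?_, fun i hi => ?_⟩
      · rcases lt_or_ge (i : ℕ) j with hi | hi
        · refine ⟨by rw [e1 i hi]; exact (hx.1 i).1, by rw [e1 i hi]; exact (hx.1 i).2.1, ?_,
            fun _ => by rw [e1 i hi]; exact (hx.1 i).2.2.2 hi⟩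
          intro k hk
          rw [e1 i hi]
          rcases lt_or_ge (k : ℕ) j with hk' | hk'
          · rw [e1 k hk']; exact (hx.1 i).2.2.1 k hk
          · rw [e2 k hk']; exact (hx'.2 k hk').trans ((hx.1 i).2.2.2 hi)
        · refine ⟨by rw [e2 i hi]; exact (hx'.1 i).1, by rw [e2 i hi]; exact (hx'.1 i).2.1, ?_,
            fun h => absurd h (not_lt.2 hi)⟩
          intro k hk
          rw [e2 i hi, e2 k (hi.trans hk)]
          exact (hx'.1 i).2.2.1 k hk
      · rw [e2 i hi]; exact hx'.2 i hi
  rw [this]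
  refine hf W ?_ ?_ _ _ (hP.image A) (hP.image B) ?_ ?_
  · intro h
    have := hin ⟨0, h0.trans hj⟩ h0
    rw [h, Submodule.mem_bot] at this
    exact hw.1 _ this
  · intro h
    have := hperp ⟨j, hj⟩ le_rfl
    rw [h, Submodule.top_orthogonal_eq_bot, Submodule.mem_bot] at this
    exact hw.1 _ this
  · rintro _ ⟨x, _, rfl⟩
    exact Submodule.starProjection_apply_mem W x
  · rintro _ ⟨x, _, rfl⟩
    exact hx x

lemma NullVal.comp_smul {f : Set V → ℝ} (hf : NullVal f) (c : ℝ) :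
    NullVal (fun L : Set V => f (c • L)) := by
  intro K hK u hu d h
  refine hf _ (hK.smul c) u hu (c * d) ?_
  rintro _ ⟨x, hx, rfl⟩
  have := h hx
  simp only [Set.mem_ofPred_eq] at this ⊢
  rw [inner_smul_right, this]

theorem dilation {f : Set V → ℝ} (hn : 0 < Module.finrank ℝ V) (hf : VC f) (hnull : NullVal f)
    (ht : TransInv f) (ho : OrthSumVanish f) {K : Set V} (hK : CB K) :
    f ((2:ℝ) • K) = 2 * f K := by
  have hg : VC (fun K => f ((2:ℝ) • K) + (-2) * f K) :=
    (hf.comp_smul (by norm_num)).add (hf.const_mul _)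
  have hg' : NullVal (fun K => f ((2:ℝ) • K) + (-2) * f K) := by
    intro K hK u hu c h
    have h1 := hnull.comp_smul 2 K hK u hu c h
    have h2 := hnull K hK u hu c h
    simp only at h1 ⊢
    rw [h1, h2]; simp
  have := ortho_vanish_all rfl hg hg' ?_ hK
  · linarith
  intro w hw
  have hcb : CB (chain w) := by rw [← dblP_zero]; exact CB.dblP rfl hw 0
  have key : ∀ j, 0 < j → j ≤ Module.finrank ℝ V → f (dblR w 1) = f (dblR w j) := by
    intro j h0
    induction j, h0 using Nat.le_induction with
    | base => intro _; rfl
    | succ j h1 ih =>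
      intro hj
      rw [ih (by omega), dbl_cut rfl hw (hf.cut hnull) (by omega),
        dblP_vanish rfl hw ho h1 (by omega), zero_add]
  obtain ⟨v, hv⟩ := dblR_last hw
  have h1 := dbl_cut rfl hw (hf.cut hnull) hn
  rw [dblP_zero, dblR_zero, zero_add, key _ hn le_rfl, hv, ht _ hcb] at h1
  rw [h1]; ring

end sec4


section sec5
variable {V : Type} [NormedAddCommGroup V] [InnerProductSpace ℝ V] [FiniteDimensional ℝ V]

lemma antitone_half_smul {K : Set V} (hK : CB K) (h0 : (0:V) ∈ K) :
    Antitone (fun n : ℕ => ((1/2:ℝ)^n) • K) := by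
  refine antitone_nat_of_succ_le fun n => ?_
  rintro _ ⟨k, hk, rfl⟩
  refine ⟨(1/2:ℝ) • k, hK.2.smul_mem_of_zero_mem h0 hk ⟨by norm_num, by norm_num⟩, ?_⟩
  simp only [smul_smul, pow_succ]

lemma iInter_half_smul {K : Set V} (hK : CB K) (h0 : (0:V) ∈ K) :
    ⋂ n : ℕ, ((1/2:ℝ)^n) • K = {0} := by
  apply Set.Subset.antisymm
  · intro x hx
    rw [Set.mem_iInter] at hx
    obtain ⟨R, hR⟩ := (Metric.isBounded_iff_subset_closedBall 0).1 hK.1.isBounded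
    have h1 : ∀ n : ℕ, ‖x‖ ≤ (1/2:ℝ)^n * R := by
      intro n
      obtain ⟨k, hk, rfl⟩ := hx n
      have := hR hk
      rw [mem_closedBall_zero_iff] at this
      simp only
      rw [norm_smul, norm_pow, Real.norm_of_nonneg (by norm_num : (0:ℝ) ≤ 1/2)]
      gcongr
    have h2 : Tendsto (fun n : ℕ => (1/2:ℝ)^n * R) atTop (𝓝 (0 * R)) :=
      (tendsto_pow_atTop_nhds_zero_of_lt_one (by norm_num) (by norm_num)).mul_const R
    have := ge_of_tendsto' h2 h1
    simp only [zero_mul, norm_le_zero_iff] at this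
    simp [this]
  · rintro x rfl
    exact Set.mem_iInter.2 fun n => ⟨0, h0, by simp⟩

/-- additivity defect -/
def defect (f : Set V → ℝ) (K L : Set V) : ℝ := f (K + L) - f L - f K

lemma defect_trans {f : Set V → ℝ} (ht : TransInv f) {K L : Set V} (hK : CB K) (hL : CB L)
    (v : V) : defect f ({v} + K) L = defect f K L := by
  unfold defect
  rw [add_assoc, ht _ (hK.add hL), ht _ hK]

lemma defect_trans' {f : Set V → ℝ} (ht : TransInv f) {K L : Set V} (hK : CB K) (hL : CB L)
    (v : V) : defect f K ({v} + L) = defect f K L := by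
  unfold defect
  rw [add_left_comm, ht _ (hK.add hL), ht _ hL]

theorem additivity_aux {f : Set V → ℝ} (hf : VC f) (ht : TransInv f)
    (h2 : ∀ L, CB L → f ((2:ℝ) • L) = 2 * f L) (j : ℕ) :
    ∀ W : Submodule ℝ V, Module.finrank ℝ W ≤ j → ∀ K L : Set V, CB K → K.Nonempty → CB L →
      L.Nonempty → L ⊆ W → f (K + L) = f K + f L := by
  have hz : f {0} = 0 := by
    have := h2 {0} (CB.singleton 0)
    rw [Set.smul_set_singleton, smul_zero] at this
    linarith
  induction j with
  | zero =>
    intro W hW K L hK hKn hL hLn hLW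
    have hW0 : W = ⊥ := Submodule.finrank_eq_zero.1 (Nat.le_zero.1 hW)
    have : L = {0} := by
      refine hLn.subset_singleton_iff.1 fun x hx => ?_
      have := hLW hx
      rw [hW0] at this
      simpa using this
    rw [this, hz]
    simp
  | succ j ih =>
    intro W hW
    rcases hW.lt_or_eq with hlt | hW
    · exact ih W (by omega)
    -- the functional on `W`
    have step : ∀ K M : Set V, CB K → K.Nonempty → CB M → M.Nonempty → M ⊆ W →
        defect f K ((2:ℝ) • M) = 2 * defect f K M := by
      intro K M hK hKn hM hMn hMW
      let ι := W.subtypeL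
      let g : Set W → ℝ := fun L => f (ι '' L + K) + ((-1) * f (ι '' L + {0}) + (- f K) * eulerC L)
      have hgn : ∀ L : Set W, L.Nonempty → g L = defect f K (ι '' L) := by
        intro L hL
        simp only [g, eulerC_of_nonempty hL, defect, Set.singleton_zero, add_zero]
        rw [add_comm K]
        ring
      have hge : g ∅ = 0 := by simp [g, eulerC_empty, hf.empty]
      have hgVC : VC g := (hf.comp_add W hK).add (((hf.comp_add W (CB.singleton 0)).const_mul _).add
        (VC.euler.const_mul _))
      have hfd : FiniteDimensional ℝ W := inferInstance
      have hgnull : NullVal g := by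
        intro L hL u hu c hLu
        rcases L.eq_empty_or_nonempty with rfl | ⟨l, hl⟩
        · exact hge
        rw [hgn L ⟨l, hl⟩, ← defect_trans' ht hK (hL.image ι) (-(l:V))]
        have hlt : W ⊓ (ℝ ∙ (u:V))ᗮ < W := by
          refine lt_of_le_of_ne inf_le_left fun h => ?_
          have h1 : (u:V) ∈ W ⊓ (ℝ ∙ (u:V))ᗮ := by rw [h]; exact u.2
          have h3 := (Submodule.mem_orthogonal_singleton_iff_inner_right).1 h1.2
          rw [inner_self_eq_zero] at h3
          exact hu (by simpa using h3)
        have h3 := ih (W ⊓ (ℝ ∙ (u:V))ᗮ) (by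
            have := Submodule.finrank_lt_finrank_of_lt hlt
            omega) K ({-(l:V)} + ι '' L) hK hKn ((CB.singleton _).add (hL.image ι))
            ((Set.singleton_nonempty _).add (Set.Nonempty.image _ ⟨l, hl⟩)) (by
              intro x hx
              rw [mem_singleton_add] at hx
              obtain ⟨y, hy, hxy⟩ := hx
              have hx' : x = (y - l : W) := by
                simp only [ι, Submodule.subtypeL_apply] at hxy
                rw [Submodule.coe_sub, hxy]; simp
              rw [hx']
              refine ⟨Subtype.mem _, ?_⟩
              refine (Submodule.mem_orthogonal_singleton_iff_inner_right).2 ?_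
              have e1 : inner ℝ u y = c := hLu hy
              have e2 : inner ℝ u l = c := hLu hl
              rw [← Submodule.coe_inner, inner_sub_right, e1, e2, sub_self])
        unfold defect
        rw [h3]; ring
      have hgt : TransInv g := by
        intro L hL v
        rcases L.eq_empty_or_nonempty with rfl | hLn
        · simp
        rw [hgn L hLn, hgn _ ((Set.singleton_nonempty _).add hLn), Set.image_add,
          Set.image_singleton, defect_trans' ht hK (hL.image ι)]
      have hgo : OrthSumVanish g := by
        intro U hU1 hU2 L₁ L₂ hL₁ hL₂ h₁ h₂
        rcases L₁.eq_empty_or_nonempty with rfl | hn₁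
        · simpa using hge
        rcases L₂.eq_empty_or_nonempty with rfl | hn₂
        · simpa using hge
        rw [hgn _ (hn₁.add hn₂), Set.image_add]
        have hM : ∀ U : Submodule ℝ W, U ≠ ⊤ → ∀ L : Set W, CB L → L.Nonempty → L ⊆ U →
            ∀ K, CB K → K.Nonempty → f (K + ι '' L) = f K + f (ι '' L) := by
          intro U hU L hL hLn hLU K hK hKn
          refine ih (U.map W.subtype) ?_ K (ι '' L) hK hKn (hL.image ι) (hLn.image _) ?_
          · have h1 := Submodule.finrank_lt hU
            have h2 := Submodule.finrank_map_le W.subtype U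
            omega
          · rintro _ ⟨x, hx, rfl⟩
            exact ⟨x, hLU hx, rfl⟩
        have hU3 : Uᗮ ≠ ⊤ := by
          intro h
          apply hU1
          rw [Submodule.orthogonal_eq_top_iff] at h
          exact h
        unfold defect
        rw [← add_assoc, hM _ hU3 L₂ hL₂ hn₂ h₂ _ (hK.add (hL₁.image ι)) (hKn.add (hn₁.image ι)),
          hM _ hU2 L₁ hL₁ hn₁ h₁ _ hK hKn,
          hM _ hU3 L₂ hL₂ hn₂ h₂ _ (hL₁.image ι) (hn₁.image ι)]
        ring
      have hMi : ι '' (ι ⁻¹' M) = M := by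
        rw [Set.image_preimage_eq_inter_range]
        refine Set.inter_eq_left.2 fun x hx => ⟨⟨x, hMW hx⟩, rfl⟩
      have hMn' : (ι ⁻¹' M).Nonempty := by
        obtain ⟨x, hx⟩ := hMn
        exact ⟨⟨x, hMW hx⟩, hx⟩
      have hMc : CB (ι ⁻¹' M) := by
        refine ⟨?_, hM.2.linear_preimage ι.toLinearMap⟩
        have : Topology.IsClosedEmbedding ι :=
          LinearMap.isClosedEmbedding_of_injective (f := W.subtype) (by simp)
        exact this.isCompact_preimage hM.1
      have := dilation (by omega) hgVC hgnull hgt hgo hMc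
      rw [hgn _ hMn', hgn _ hMn'.smul_set, image_smul_set, hMi] at this
      exact this
    intro K L hK hKn hL hLn hLW
    have half : ∀ K, CB K → K.Nonempty → defect f ((1/2:ℝ) • K) L = defect f K L := by
      intro K hK hKn
      have h3 := step ((2:ℝ) • ((1/2:ℝ) • K)) L ((hK.smul _).smul _) hKn.smul_set.smul_set hL hLn hLW
      have h4 : defect f ((2:ℝ) • ((1/2:ℝ) • K)) ((2:ℝ) • L) = 2 * defect f ((1/2:ℝ) • K) L := by
        unfold defect
        rw [← smul_add, h2 _ ((hK.smul _).add hL), h2 _ hL, h2 _ (hK.smul _)]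
        ring
      rw [h4, smul_smul] at h3
      norm_num at h3
      norm_num
      exact h3
    obtain ⟨k, hk⟩ := hKn
    have hK' : CB ({-k} + K) := (CB.singleton _).add hK
    have h0 : (0:V) ∈ ({-k} : Set V) + K := mem_singleton_add.2 (by simpa using hk)
    have hall : ∀ n : ℕ, defect f (((1/2:ℝ)^n) • ({-k} + K)) L = defect f K L := by
      intro n
      induction n with
      | zero => rw [pow_zero, one_smul, defect_trans ht hK hL]
      | succ n ihn => rw [pow_succ', ← smul_smul, half _ (hK'.smul _) (Set.Nonempty.smul_set ⟨0, h0⟩), ihn]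
    have hanti := antitone_half_smul hK' h0
    have t1 := hf.cont _ (fun n => hK'.smul _) hanti
    have t2 := hf.cont (fun n : ℕ => ((1/2:ℝ)^n) • ({-k} + K) + L) (fun n => (hK'.smul _).add hL)
      (fun m n h => Set.add_subset_add_right (hanti h))
    rw [← iInter_add (fun n => hK'.smul _) hanti hL, iInter_half_smul hK' h0] at t2
    rw [iInter_half_smul hK' h0] at t1
    have t3 := (t2.sub_const (f L)).sub t1
    have t4 : defect f K L = f ({0} + L) - f L - f {0} := by
      refine tendsto_nhds_unique ?_ t3
      refine tendsto_const_nhds.congr fun n => ?_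
      rw [← hall n]; rfl
    rw [hz, Set.singleton_zero, zero_add] at t4
    unfold defect at t4
    linarith

theorem additivity {f : Set V → ℝ} (hf : VC f) (ht : TransInv f)
    (h2 : ∀ L, CB L → f ((2:ℝ) • L) = 2 * f L) {K L : Set V} (hK : CB K) (hKn : K.Nonempty)
    (hL : CB L) (hLn : L.Nonempty) : f (K + L) = f K + f L :=
  additivity_aux hf ht h2 _ ⊤ le_rfl K L hK hKn hL hLn (Set.subset_univ _)

end sec5


/-- Minkowski additivity -/
def AddVal {V : Type} [NormedAddCommGroup V] [InnerProductSpace ℝ V] (f : Set V → ℝ) : Prop :=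
  ∀ K L : Set V, CB K → K.Nonempty → CB L → L.Nonempty → f (K + L) = f K + f L

/-- the reflection in the hyperplane orthogonal to `u` -/
def hypRefl {V : Type} [NormedAddCommGroup V] [InnerProductSpace ℝ V] [FiniteDimensional ℝ V]
    (u : V) : V ≃ₗᵢ[ℝ] V := (ℝ ∙ u)ᗮ.reflection

/-- reflection invariance -/
def ReflInv {V : Type} [NormedAddCommGroup V] [InnerProductSpace ℝ V] [FiniteDimensional ℝ V]
    (f : Set V → ℝ) : Prop := ∀ K : Set V, CB K → ∀ u : V, f (hypRefl u '' K) = f K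

section sec6
variable {V : Type} [NormedAddCommGroup V] [InnerProductSpace ℝ V] [FiniteDimensional ℝ V]

lemma CB.refl {K : Set V} (hK : CB K) (u : V) : CB (hypRefl u '' K) :=
  hK.image ((hypRefl u).toContinuousLinearEquiv : V →L[ℝ] V)

lemma AddVal.zero {f : Set V → ℝ} (hadd : AddVal f) : f {0} = 0 := by
  have := hadd {0} {0} (CB.singleton 0) (Set.singleton_nonempty _) (CB.singleton 0)
    (Set.singleton_nonempty _)
  simp only [Set.singleton_zero, add_zero] at this ⊢
  linarith

lemma AddVal.nat {f : Set V → ℝ} (hadd : AddVal f) {K : Set V} (hK : CB K) (hn : K.Nonempty)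
    (n : ℕ) : f ((n:ℝ) • K) = n * f K := by
  induction n with
  | zero => simp [Set.zero_smul_set hn, ← Set.singleton_zero, hadd.zero]
  | succ n ih =>
    push_cast
    rw [hK.2.add_smul (by positivity) zero_le_one, one_smul,
      hadd _ _ (hK.smul _) hn.smul_set hK hn, ih]
    ring

lemma AddVal.rat {f : Set V → ℝ} (hadd : AddVal f) {K : Set V} (hK : CB K) (hn : K.Nonempty)
    (n m : ℕ) (hm : 0 < m) : f (((n:ℝ) / m) • K) = n / m * f K := by
  have hm' : (m:ℝ) ≠ 0 := by positivity
  have h1 := hadd.nat (hK.smul ((n:ℝ)/m)) hn.smul_set m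
  rw [smul_smul, mul_div_cancel₀ _ hm', hadd.nat hK hn] at h1
  field_simp
  linarith

lemma CB.sum {ι : Type} (s : Finset ι) (M : ι → Set V) (hM : ∀ i, CB (M i)) :
    CB (∑ i ∈ s, M i) := by
  classical
  induction s using Finset.induction_on with
  | empty => simpa [← Set.singleton_zero] using CB.singleton (0:V)
  | insert a s ha ih => rw [Finset.sum_insert ha]; exact (hM a).add ih

lemma nonempty_setSum {ι : Type} (s : Finset ι) (M : ι → Set V) (hM : ∀ i, (M i).Nonempty) :
    (∑ i ∈ s, M i).Nonempty := by
  classical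
  induction s using Finset.induction_on with
  | empty => simp
  | insert a s ha ih => rw [Finset.sum_insert ha]; exact (hM a).add ih

lemma AddVal.sum {f : Set V → ℝ} (hadd : AddVal f) {ι : Type} (s : Finset ι) (M : ι → Set V)
    (hM : ∀ i, CB (M i)) (hn : ∀ i, (M i).Nonempty) :
    f (∑ i ∈ s, M i) = ∑ i ∈ s, f (M i) := by
  classical
  induction s using Finset.induction_on with
  | empty => simpa [← Set.singleton_zero] using hadd.zero
  | insert a s ha ih =>
    rw [Finset.sum_insert ha, Finset.sum_insert ha,
      hadd _ _ (hM a) (hn a) (CB.sum s M hM) (nonempty_setSum s M hn), ih]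

lemma norm_le_of_inner_le {x : V} {c : ℝ} (hc : 0 ≤ c) (h : ∀ u : V, ‖u‖ = 1 → inner ℝ u x ≤ c) :
    ‖x‖ ≤ c := by
  by_cases hx : x = 0
  · simpa [hx] using hc
  have hx' : ‖x‖ ≠ 0 := norm_ne_zero_iff.2 hx
  have := h ((‖x‖)⁻¹ • x) (by rw [norm_smul, norm_inv, norm_norm, inv_mul_cancel₀ hx'])
  rw [inner_smul_left, real_inner_self_eq_norm_sq] at this
  simp only [map_inv₀, conj_trivial] at this
  rwa [pow_two, inv_mul_cancel_left₀ hx'] at this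

/-- a support direction at which `M` is small -/
lemma exists_direction {M : Set V} (hM : CB M) (hMn : M.Nonempty) {s : ℝ}
    (h : ¬ Metric.closedBall 0 s ⊆ M) :
    ∃ u : V, ‖u‖ = 1 ∧ ∀ x ∈ M, inner ℝ u x ≤ s := by
  obtain ⟨p, hp, hpM⟩ := Set.not_subset.1 h
  obtain ⟨φ, c, h1, h2⟩ := geometric_hahn_banach_closed_point hM.2 hM.1.isClosed hpM
  let u := (InnerProductSpace.toDual ℝ V).symm φ
  have hu : ∀ x, inner ℝ u x = φ x := fun x => InnerProductSpace.toDual_symm_apply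
  have hu0 : u ≠ 0 := by
    intro h
    obtain ⟨m, hm⟩ := hMn
    have e1 := h1 m hm
    rw [← hu, h, inner_zero_left] at e1
    rw [← hu, h, inner_zero_left] at h2
    linarith
  have hn : 0 < ‖u‖ := norm_pos_iff.2 hu0
  refine ⟨(‖u‖)⁻¹ • u, by rw [norm_smul, norm_inv, norm_norm, inv_mul_cancel₀ hn.ne'], ?_⟩
  intro x hx
  rw [inner_smul_left]
  simp only [map_inv₀, conj_trivial]
  rw [inv_mul_le_iff₀ hn]
  have e1 := h1 x hx
  have e2 := real_inner_le_norm u p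
  rw [mem_closedBall_zero_iff] at hp
  rw [hu] at e2
  have e3 : ‖u‖ * ‖p‖ ≤ ‖u‖ * s := by gcongr
  rw [hu]
  linarith

/-- the averaging step -/
lemma averaging {f : Set V → ℝ} (hadd : AddVal f) (hr : ReflInv f) {r ε : ℝ} (hr0 : 0 < r)
    (hε : 0 < ε) (hεr : ε < r) (hV : 0 < Module.finrank ℝ V) :
    ∃ δ : ℝ, 0 < δ ∧ δ ≤ ε ∧ ∀ M, CB M → Metric.closedBall 0 (1/2) ⊆ M →
      M ⊆ Metric.closedBall 0 (r + δ) → ¬ Metric.closedBall 0 (r - ε) ⊆ M →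
      ∃ M', CB M' ∧ Metric.closedBall 0 (1/2) ⊆ M' ∧ f M' = f M ∧
        M' ⊆ Metric.closedBall 0 (r - δ) := by
  have : Nontrivial V := Module.finrank_pos_iff.1 hV
  let η := ε / (2 * (r + 1))
  have hη : 0 < η := by positivity
  obtain ⟨t, hts, htf, htc⟩ := finite_cover_balls_of_compact (isCompact_sphere (0:V) 1) hη
  obtain ⟨s, rfl⟩ := htf.exists_finset_coe
  have hcov : ∀ u : V, ‖u‖ = 1 → ∃ p ∈ s, ‖u - p‖ < η := by
    intro u hu
    have := htc (mem_sphere_zero_iff_norm.2 hu)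
    simp only [Set.mem_iUnion, Metric.mem_ball, dist_eq_norm] at this
    obtain ⟨p, hp, h⟩ := this
    exact ⟨p, hp, h⟩
  have hsn : s.Nonempty := by
    obtain ⟨u, hu⟩ := exists_norm_eq V (zero_le_one)
    obtain ⟨p, hp, -⟩ := hcov u hu
    exact ⟨p, hp⟩
  let k := s.card
  have hk : 0 < k := hsn.card_pos
  have hk1 : (1:ℝ) ≤ k := by exact_mod_cast hk
  have hk0 : (0:ℝ) < k := by positivity
  have hδ0 : 0 < min 1 (ε / (4 * k)) := by positivity
  refine ⟨min 1 (ε / (4 * k)), hδ0, ?_, ?_⟩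
  · refine (min_le_right _ _).trans ?_
    rw [div_le_iff₀ (by positivity)]
    nlinarith
  set δ := min 1 (ε / (4 * k)) with hδ
  have hδ1 : δ ≤ 1 := min_le_left _ _
  have hδ2 : δ ≤ ε / (4 * k) := min_le_right _ _
  intro M hM hMb hMr hMs
  have hMn : M.Nonempty := ⟨0, hMb (by simp)⟩
  obtain ⟨u₀, hu₀, hu₀M⟩ := exists_direction hM hMn hMs
  let ρ : V → V ≃ₗᵢ[ℝ] V := fun p => hypRefl (u₀ - p)
  have hρ : ∀ p ∈ s, ρ p u₀ = p := fun p hp => Submodule.reflection_sub (by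
    rw [hu₀, mem_sphere_zero_iff_norm.1 (hts hp)])
  have hcb : ∀ p, CB (ρ p '' M) := fun p => hM.refl _
  refine ⟨((1:ℝ)/k) • ∑ p ∈ s, ρ p '' M, (CB.sum s _ hcb).smul _, ?_, ?_, ?_⟩
  · intro x hx
    rw [Set.mem_smul_set_iff_inv_smul_mem₀ (by positivity)]
    rw [Set.mem_finsetSum]
    refine ⟨fun _ => x, fun {p} hp => ⟨(ρ p).symm x, hMb (by simpa using hx), by simp⟩, ?_⟩
    simp [k]
    norm_cast
  · have h1 := hadd.rat (CB.sum s _ hcb) (nonempty_setSum s _ (fun p => hMn.image (ρ p))) 1 k hk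
    rw [Nat.cast_one] at h1
    rw [h1, hadd.sum s _ hcb (fun p => hMn.image _), Finset.sum_congr rfl (fun p _ => hr M hM _)]
    simp only [Finset.sum_const, nsmul_eq_mul]
    field_simp
    rfl
  · intro x hx
    rw [Set.mem_smul_set_iff_inv_smul_mem₀ (by positivity), Set.mem_finsetSum] at hx
    obtain ⟨g, hg, hgx⟩ := hx
    rw [one_div, inv_inv] at hgx
    rw [mem_closedBall_zero_iff]
    have hδr : δ ≤ ε / 4 := hδ2.trans (by
      rw [div_le_div_iff₀ (by positivity) (by positivity)]; nlinarith)
    refine norm_le_of_inner_le (by linarith) fun u hu => ?_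
    obtain ⟨p, hp, hpu⟩ := hcov u hu
    have e1 : ∀ i ∈ s, (inner ℝ u (g i) : ℝ) ≤ r + δ := by
      intro i hi
      obtain ⟨m, hm, hmi⟩ := hg hi
      have := hMr hm
      rw [mem_closedBall_zero_iff] at this
      calc (inner ℝ u (g i) : ℝ) ≤ ‖u‖ * ‖g i‖ := real_inner_le_norm _ _
        _ = ‖m‖ := by rw [hu, one_mul, ← hmi, LinearIsometryEquiv.norm_map]
        _ ≤ _ := this
    have e2 : (inner ℝ u (g p) : ℝ) ≤ r - ε / 2 := by
      obtain ⟨m, hm, hmi⟩ := hg hp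
      have h1 := hMr hm
      rw [mem_closedBall_zero_iff] at h1
      have h2 : (inner ℝ p (g p) : ℝ) = inner ℝ u₀ m := by
        rw [← hmi]
        nth_rewrite 1 [← hρ p hp]
        exact LinearIsometryEquiv.inner_map_map _ _ _
      have h3 : (inner ℝ (u - p) (g p) : ℝ) ≤ η * (r + 1) := by
        calc (inner ℝ (u - p) (g p) : ℝ) ≤ ‖u - p‖ * ‖g p‖ := real_inner_le_norm _ _
          _ = ‖u - p‖ * ‖m‖ := by rw [← hmi, LinearIsometryEquiv.norm_map]
          _ ≤ η * (r + 1) := by gcongr; linarith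
      have h4 : η * (r + 1) = ε / 2 := by
        simp only [η]; field_simp
      have h5 := hu₀M m hm
      rw [inner_sub_left, h2] at h3
      linarith
    have e3 : ∑ i ∈ s, (inner ℝ u (g i) : ℝ) ≤ k * (r + δ) - (ε / 2 + δ) := by
      classical
      rw [← Finset.add_sum_erase _ _ hp]
      have h1 := Finset.sum_le_card_nsmul (s.erase p) (fun i => (inner ℝ u (g i) : ℝ)) (r + δ)
        (fun i hi => e1 i (Finset.mem_of_mem_erase hi))
      rw [Finset.card_erase_of_mem hp, nsmul_eq_mul, Nat.cast_pred hk] at h1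
      have : ((s.card : ℕ) : ℝ) = k := rfl
      rw [this] at h1
      linarith
    rw [← inner_sum, hgx, inner_smul_right] at e3
    have e4 : k * δ ≤ ε / 4 := by
      calc k * δ ≤ k * (ε / (4 * k)) := by gcongr
        _ = ε / 4 := by field_simp
    have e5 : (k:ℝ) * inner ℝ u x ≤ k * (r - δ) := by nlinarith
    exact le_of_mul_le_mul_left e5 hk0

end sec6


section sec7
variable {V : Type} [NormedAddCommGroup V] [InnerProductSpace ℝ V] [FiniteDimensional ℝ V]

lemma CB.ball (r : ℝ) : CB (Metric.closedBall (0:V) r) :=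
  ⟨isCompact_closedBall _ _, convex_closedBall _ _⟩

lemma exists_near_ball {f : Set V → ℝ} (hadd : AddVal f) (hr : ReflInv f)
    (hV : 0 < Module.finrank ℝ V) {K : Set V} (hK : CB K) (hKb : Metric.closedBall 0 (1/2) ⊆ K) :
    ∃ r : ℝ, 0 < r ∧ ∀ ε, 0 < ε → ε < r → ∃ M, CB M ∧ f M = f K ∧
      Metric.closedBall 0 (r - ε) ⊆ M ∧ M ⊆ Metric.closedBall 0 (r + ε) := by
  have : Nontrivial V := Module.finrank_pos_iff.1 hV
  let S : Set ℝ := {ρ | ∃ M, CB M ∧ Metric.closedBall 0 (1/2) ⊆ M ∧ f M = f K ∧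
    M ⊆ Metric.closedBall 0 ρ}
  have hSl : ∀ ρ ∈ S, 1/2 ≤ ρ := by
    rintro ρ ⟨M, hM, hMb, -, hMr⟩
    obtain ⟨u, hu⟩ := exists_norm_eq V (by norm_num : (0:ℝ) ≤ 1/2)
    have := hMr (hMb (mem_closedBall_zero_iff.2 hu.le))
    rwa [mem_closedBall_zero_iff, hu] at this
  have hSn : S.Nonempty := by
    obtain ⟨R, hR⟩ := (Metric.isBounded_iff_subset_closedBall 0).1 hK.1.isBounded
    exact ⟨R, K, hK, hKb, rfl, hR⟩
  have hSb : BddBelow S := ⟨1/2, hSl⟩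
  have hr12 : 1/2 ≤ sInf S := le_csInf hSn hSl
  refine ⟨sInf S, by linarith, fun ε hε hεr => ?_⟩
  obtain ⟨δ, hδ, hδε, H⟩ := averaging hadd hr (r := sInf S) (by linarith) hε hεr hV
  obtain ⟨ρ, ⟨M, hM, hMb, hfM, hMr⟩, hρ⟩ := exists_lt_of_csInf_lt hSn (lt_add_of_pos_right (sInf S) hδ)
  have hMr' := hMr.trans (Metric.closedBall_subset_closedBall hρ.le)
  by_cases hin : Metric.closedBall 0 (sInf S - ε) ⊆ M
  · exact ⟨M, hM, hfM, hin, hMr'.trans (Metric.closedBall_subset_closedBall (by linarith))⟩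
  · obtain ⟨M', h1, h2, h3, h4⟩ := H M hM hMb hMr' hin
    have := csInf_le hSb (show sInf S - δ ∈ S from ⟨M', h1, h2, h3.trans hfM, h4⟩)
    linarith

lemma smul_closedBall_zero {c r : ℝ} (hc : 0 < c) :
    c • Metric.closedBall (0:V) r = Metric.closedBall 0 (c * r) := by
  ext x
  rw [Set.mem_smul_set_iff_inv_smul_mem₀ hc.ne', mem_closedBall_zero_iff, mem_closedBall_zero_iff,
    norm_smul, norm_inv, Real.norm_of_nonneg hc.le, inv_mul_le_iff₀ hc]

lemma eq_ball {f : Set V → ℝ} (hf : VC f) (hadd : AddVal f) (hr : ReflInv f)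
    (hV : 0 < Module.finrank ℝ V) {K : Set V} (hK : CB K) (hKb : Metric.closedBall 0 (1/2) ⊆ K) :
    ∃ r : ℝ, 0 < r ∧ f K = f (Metric.closedBall 0 r) := by
  obtain ⟨r, hr0, H⟩ := exists_near_ball hadd hr hV hK hKb
  refine ⟨r, hr0, ?_⟩
  let a : ℕ → ℝ := fun k => (1/2)^k
  have ha0 : ∀ k, 0 < a k := fun k => by positivity
  have ha1 : ∀ k, a k ≤ 1 := fun k => pow_le_one₀ (by norm_num) (by norm_num)
  have has : ∀ k, a (k+1) = a k / 2 := fun k => by simp only [a, pow_succ]; ring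
  have hlim : Tendsto a atTop (𝓝 0) :=
    tendsto_pow_atTop_nhds_zero_of_lt_one (by norm_num) (by norm_num)
  have H' : ∀ k, ∃ M, CB M ∧ f M = f K ∧
      Metric.closedBall 0 (r - r * a k / 16) ⊆ M ∧ M ⊆ Metric.closedBall 0 (r + r * a k / 16) := by
    intro k
    have := ha0 k
    have := ha1 k
    refine H _ (by positivity) (by nlinarith)
  choose M hM hfM hMi hMo using H'
  let N : ℕ → Set V := fun k => (1 + a k) • M k
  have hpos : ∀ k, 0 < 1 + a k := fun k => by linarith [ha0 k]
  have hNo : ∀ k, N k ⊆ Metric.closedBall 0 ((1 + a k) * (r + r * a k / 16)) := by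
    intro k
    rw [← smul_closedBall_zero (hpos k)]
    exact Set.smul_set_mono (hMo k)
  have hNi : ∀ k, Metric.closedBall 0 ((1 + a k) * (r - r * a k / 16)) ⊆ N k := by
    intro k
    rw [← smul_closedBall_zero (hpos k)]
    exact Set.smul_set_mono (hMi k)
  have hNcb : ∀ k, CB (N k) := fun k => (hM k).smul _
  have hanti : Antitone N := by
    refine antitone_nat_of_succ_le fun k => ?_
    refine (hNo (k+1)).trans (Set.Subset.trans (Metric.closedBall_subset_closedBall ?_) (hNi k))
    rw [has]
    have h0 := ha0 k
    have h1 := ha1 k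
    have : (1 + a k / 2) * (1 + a k / 32) ≤ (1 + a k) * (1 - a k / 16) := by nlinarith
    have := mul_le_mul_of_nonneg_left this hr0.le
    linarith
  have hInt : ⋂ k, N k = Metric.closedBall 0 r := by
    apply Set.Subset.antisymm
    · intro x hx
      rw [Set.mem_iInter] at hx
      rw [mem_closedBall_zero_iff]
      have h1 : Tendsto (fun k => (1 + a k) * (r + r * a k / 16)) atTop
          (𝓝 ((1 + 0) * (r + r * 0 / 16))) :=
        (hlim.const_add 1).mul (((hlim.const_mul r).div_const 16).const_add r)
      have h2 := ge_of_tendsto' h1 fun k => mem_closedBall_zero_iff.1 (hNo k (hx k))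
      simpa using h2
    · refine Set.subset_iInter fun k => ?_
      refine Set.Subset.trans (Metric.closedBall_subset_closedBall ?_) (hNi k)
      have h0 := ha0 k
      have h1 := ha1 k
      have : 1 ≤ (1 + a k) * (1 - a k / 16) := by nlinarith
      have := mul_le_mul_of_nonneg_left this hr0.le
      linarith
  have hfN : ∀ k, f (N k) = (1 + a k) * f K := by
    intro k
    have hMn : (M k).Nonempty := ⟨0, hMi k (by
      have h0 := ha0 k
      have h1 := ha1 k
      simp only [Metric.mem_closedBall, dist_self]
      nlinarith)⟩
    have h1 := hadd.rat (hM k) hMn (2^k + 1) (2^k) (by positivity)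
    have h2 : (((2^k + 1 : ℕ) : ℝ) / ((2^k : ℕ) : ℝ)) = 1 + a k := by
      simp only [a]; push_cast; field_simp; rw [one_div, mul_add, ← mul_pow]; norm_num
    rw [h2, hfM k] at h1
    exact h1
  have t1 := hf.cont N hNcb hanti
  rw [hInt] at t1
  have t2 : Tendsto (fun k => f (N k)) atTop (𝓝 ((1 + 0) * f K)) := by
    simp only [hfN]
    exact (hlim.const_add 1).mul_const _
  have := tendsto_nhds_unique t1 t2
  rw [this]; ring

/-- unit cube -/
def cube {V : Type} [NormedAddCommGroup V] [InnerProductSpace ℝ V] {ι : Type} (b : ι → V) : Set V :=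
  {x | ∀ i, 0 ≤ (inner ℝ (b i) x : ℝ) ∧ (inner ℝ (b i) x : ℝ) ≤ 1}

/-- vanishing on unit cubes -/
def CubeVanish {V : Type} [NormedAddCommGroup V] [InnerProductSpace ℝ V] (f : Set V → ℝ) : Prop :=
  ∀ (ι : Type) [Fintype ι] (b : ι → V), Orthonormal ℝ b → Fintype.card ι = Module.finrank ℝ V →
    f (cube b) = 0

lemma ortho_eq_zero {ι : Type} [Fintype ι] {b : ι → V} (hb : Orthonormal ℝ b)
    (hc : Fintype.card ι = Module.finrank ℝ V) {x : V} (hx : ∀ i, (inner ℝ (b i) x : ℝ) = 0) :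
    x = 0 := by
  have hsp := hb.linearIndependent.span_eq_top_of_card_eq_finrank' hc
  have hx' : x ∈ (Submodule.span ℝ (Set.range b))ᗮ := by
    rw [Submodule.mem_orthogonal]
    intro u hu
    induction hu using Submodule.span_induction with
    | mem y hy => obtain ⟨k, rfl⟩ := hy; exact hx k
    | zero => simp
    | add x y _ _ hx hy => rw [inner_add_left, hx, hy, add_zero]
    | smul a x _ hx => rw [inner_smul_left, hx, mul_zero]
  rw [hsp, Submodule.top_orthogonal_eq_bot] at hx'
  simpa using hx'

lemma CB.cube {ι : Type} [Fintype ι] {b : ι → V} (hb : Orthonormal ℝ b)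
    (hc : Fintype.card ι = Module.finrank ℝ V) : CB (cube b) := by
  constructor
  · let T : V →ₗ[ℝ] (ι → ℝ) := LinearMap.pi fun i => (innerₗ V (b i))
    have hT : Topology.IsClosedEmbedding T := by
      apply LinearMap.isClosedEmbedding_of_injective
      rw [LinearMap.ker_eq_bot']
      intro x hx
      exact ortho_eq_zero hb hc fun i => congrFun hx i
    have := hT.isCompact_preimage
      (isCompact_univ_pi (fun _ : ι => isCompact_Icc (a := (0:ℝ)) (b := 1)))
    convert this using 1
    ext x
    exact ⟨fun h i _ => h i, fun h i => h i trivial⟩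
  · have : _root_.cube b = ⋂ i, ({x | 0 ≤ (inner ℝ (b i) x : ℝ)} ∩ {x | (inner ℝ (b i) x : ℝ) ≤ 1}) := by
      ext x; simp [_root_.cube]
    rw [this]
    exact convex_iInter fun i => (convex_ge_half _ _).inter (convex_le_half _ _)

theorem vanish_of_add {f : Set V → ℝ} (hf : VC f) (ht : TransInv f) (hadd : AddVal f)
    (hr : ReflInv f) (hq : CubeVanish f) (hV : 0 < Module.finrank ℝ V) {K : Set V} (hK : CB K) :
    f K = 0 := by
  rcases K.eq_empty_or_nonempty with rfl | ⟨k, hk⟩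
  · exact hf.empty
  let b := stdOrthonormalBasis ℝ V
  have hcard : Fintype.card (Fin (Module.finrank ℝ V)) = Module.finrank ℝ V := by simp
  have hbi : ∀ i, (inner ℝ (b i) (∑ j, (1/2:ℝ) • b j) : ℝ) = 1/2 := by
    intro i
    rw [inner_sum, Finset.sum_eq_single i]
    · rw [inner_smul_right, real_inner_self_eq_norm_sq, b.norm_eq_one]; norm_num
    · intro j _ hj
      rw [inner_smul_right, b.inner_eq_zero hj.symm, mul_zero]
    · simp
  have hQ := CB.cube b.orthonormal hcard
  let Q : Set V := {-(∑ j, (1/2:ℝ) • b j)} + cube b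
  have hQcb : CB Q := (CB.singleton _).add hQ
  have hfQ : f Q = 0 := by rw [ht _ hQ]; exact hq _ _ b.orthonormal hcard
  have hQb : Metric.closedBall 0 (1/2) ⊆ Q := by
    intro x hx
    rw [mem_closedBall_zero_iff] at hx
    refine mem_singleton_add.2 fun i => ?_
    have h1 := abs_real_inner_le_norm (b i) x
    rw [b.norm_eq_one, one_mul] at h1
    have h2 := abs_le.1 (h1.trans hx)
    rw [sub_neg_eq_add, inner_add_right, hbi]
    constructor <;> linarith
  have hQn : Q.Nonempty := ⟨0, hQb (by simp)⟩
  obtain ⟨r, hr0, hrQ⟩ := eq_ball hf hadd hr hV hQcb hQb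
  have hball : ∀ ρ : ℝ, 0 < ρ → f (Metric.closedBall (0:V) ρ) = 0 := by
    intro ρ hρ
    obtain ⟨q', hqa', hqg', hql⟩ := Real.exists_seq_rat_strictAnti_tendsto (ρ / r)
    let q : ℕ → ℝ := fun n => q' n
    have hqa : StrictAnti q := fun m n h => Rat.cast_lt.2 (hqa' h)
    have hqg : ∀ n, (∃ p : ℚ, (p:ℝ) = q n) ∧ ρ / r < q n := fun n => ⟨⟨q' n, rfl⟩, hqg' n⟩
    have hq0 : ∀ n, 0 < q n := fun n => (by positivity : 0 < ρ / r).trans (hqg n).2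
    have hz : ∀ n, f (Metric.closedBall (0:V) (q n * r)) = 0 := by
      intro n
      obtain ⟨p, hp⟩ := (hqg n).1
      have hp0 : 0 < p := by
        have := hq0 n; rw [← hp] at this; exact_mod_cast this
      have h1 := hadd.rat (CB.ball (V := V) r) ⟨0, by simp [hr0.le]⟩ p.num.toNat p.den p.pos
      have h2 : ((p.num.toNat : ℕ) : ℝ) / (p.den : ℝ) = q n := by
        rw [← hp]
        have h3 : ((p.num.toNat : ℕ) : ℝ) = ((p.num : ℤ) : ℝ) := by
          have : ((p.num.toNat : ℕ) : ℤ) = p.num := Int.toNat_of_nonneg (Rat.num_nonneg.2 hp0.le)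
          exact_mod_cast this
        rw [h3]
        exact (Rat.cast_def p).symm
      rw [h2, smul_closedBall_zero (hq0 n), ← hrQ, hfQ, mul_zero] at h1
      exact h1
    have t1 := hf.cont (fun n => Metric.closedBall (0:V) (q n * r)) (fun n => CB.ball _)
      (fun m n h => Metric.closedBall_subset_closedBall (by
        have := hqa.antitone h
        gcongr))
    simp only [hz] at t1
    have hI : ⋂ n, Metric.closedBall (0:V) (q n * r) = Metric.closedBall 0 ρ := by
      apply Set.Subset.antisymm
      · intro x hx
        rw [Set.mem_iInter] at hx
        have h1 : Tendsto (fun n => q n * r) atTop (𝓝 (ρ / r * r)) := hql.mul_const r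
        rw [div_mul_cancel₀ _ hr0.ne'] at h1
        exact mem_closedBall_zero_iff.2
          (ge_of_tendsto' h1 fun n => mem_closedBall_zero_iff.1 (hx n))
      · refine Set.subset_iInter fun n => Metric.closedBall_subset_closedBall ?_
        have := (hqg n).2
        rw [div_lt_iff₀ hr0] at this
        exact this.le
    rw [hI] at t1
    exact (tendsto_nhds_unique t1 tendsto_const_nhds)
  have hK' : CB ({-k} + K) := (CB.singleton _).add hK
  have h0 : (0:V) ∈ ({-k} : Set V) + K := mem_singleton_add.2 (by simpa using hk)
  obtain ⟨ρ, hρ, h1⟩ := eq_ball hf hadd hr hV (hK'.add hQcb) (fun x hx =>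
    ⟨0, h0, x, hQb hx, by simp⟩)
  rw [hadd _ _ hK' ⟨0, h0⟩ hQcb hQn, hball ρ hρ, hfQ, add_zero, ht _ hK] at h1
  exact h1

end sec7


section sec8
variable {V : Type} [NormedAddCommGroup V] [InnerProductSpace ℝ V] [FiniteDimensional ℝ V]

lemma hypRefl_apply (u x : V) :
    hypRefl u x = x - (2 * (inner ℝ u x / ‖u‖ ^ 2) : ℝ) • u := by
  unfold hypRefl
  rw [Submodule.reflection_orthogonal_apply, Submodule.reflection_singleton_apply]
  simp only [RCLike.ofReal_real_eq_id, id, mul_smul, two_smul]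
  abel

lemma NullVal.restrict {f : Set V → ℝ} (hf : NullVal f) (W : Submodule ℝ V) {M : Set V} (hM : CB M)
    (hMW : M ⊆ (Wᗮ : Submodule ℝ V)) : NullVal (fun L : Set W => f (W.subtypeL '' L + M)) := by
  intro L hL u hu c h
  refine hf _ ((hL.image _).add hM) (u : V) (by simpa using hu) c ?_
  rintro _ ⟨_, ⟨l, hl, rfl⟩, m, hm, rfl⟩
  have h1 : inner ℝ u l = c := h hl
  have h2 : inner ℝ (u:V) m = 0 := Submodule.inner_right_of_mem_orthogonal u.2 (hMW hm)
  simp only [Set.mem_ofPred_eq, inner_add_right, h2, add_zero, Submodule.subtypeL_apply]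
  exact h1

lemma TransInv.restrict {f : Set V → ℝ} (hf : TransInv f) (W : Submodule ℝ V) {M : Set V}
    (hM : CB M) : TransInv (fun L : Set W => f (W.subtypeL '' L + M)) := by
  intro L hL v
  simp only
  rw [Set.image_add, Set.image_singleton, add_assoc, hf _ ((hL.image _).add hM)]

lemma ReflInv.restrict {f : Set V → ℝ} (hf : ReflInv f) (W : Submodule ℝ V) {M : Set V} (hM : CB M)
    (hMW : M ⊆ (Wᗮ : Submodule ℝ V)) : ReflInv (fun L : Set W => f (W.subtypeL '' L + M)) := by
  intro L hL u
  simp only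
  rw [← hf _ ((hL.image W.subtypeL).add hM) (u : V), Set.image_add]
  congr 2
  · rw [Set.image_image, Set.image_image]
    refine Set.image_congr fun x _ => ?_
    rw [hypRefl_apply, hypRefl_apply]
    simp
  · have : Set.EqOn (hypRefl (u:V)) id M := by
      intro m hm
      have h2 : inner ℝ (u:V) m = 0 := Submodule.inner_right_of_mem_orthogonal u.2 (hMW hm)
      rw [hypRefl_apply, h2]
      simp
    rw [this.image_eq]
    simp

lemma cube_sum (W : Submodule ℝ V) {ι₁ ι₂ : Type} [Fintype ι₁] [Fintype ι₂] (b₁ : ι₁ → W)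
    (b₂ : ι₂ → (Wᗮ : Submodule ℝ V)) :
    (Wᗮ.subtypeL '' cube b₂) + (W.subtypeL '' cube b₁) =
      cube (Sum.elim (fun i => (b₁ i : V)) (fun i => (b₂ i : V))) := by
  apply Set.Subset.antisymm
  · rintro _ ⟨_, ⟨y, hy, rfl⟩, _, ⟨x, hx, rfl⟩, rfl⟩ i
    rcases i with i | i
    · have h1 : inner ℝ (b₁ i : V) (y : V) = 0 := Submodule.inner_right_of_mem_orthogonal (b₁ i).2 y.2
      simpa [inner_add_right, h1] using hx i
    · have h1 : inner ℝ (b₂ i : V) (x : V) = 0 := Submodule.inner_left_of_mem_orthogonal x.2 (b₂ i).2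
      simpa [inner_add_right, h1] using hy i
  · intro z hz
    let x : W := ⟨W.starProjection z, W.starProjection_apply_mem z⟩
    let y : (Wᗮ : Submodule ℝ V) := ⟨z - W.starProjection z, W.sub_starProjection_mem_orthogonal z⟩
    have hxy : (y : V) + (x : V) = z := by simp [x, y]
    refine ⟨_, ⟨y, fun i => ?_, rfl⟩, _, ⟨x, fun i => ?_, rfl⟩, hxy⟩
    · have h1 : inner ℝ (b₂ i : V) (x : V) = 0 := Submodule.inner_left_of_mem_orthogonal x.2 (b₂ i).2
      have := hz (Sum.inr i)
      rw [← hxy] at this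
      simpa [inner_add_right, h1] using this
    · have h1 : inner ℝ (b₁ i : V) (y : V) = 0 := Submodule.inner_right_of_mem_orthogonal (b₁ i).2 y.2
      have := hz (Sum.inl i)
      rw [← hxy] at this
      simpa [inner_add_right, h1] using this

lemma orthonormal_sum (W : Submodule ℝ V) {ι₁ ι₂ : Type} [Fintype ι₁] [Fintype ι₂] {b₁ : ι₁ → W}
    {b₂ : ι₂ → (Wᗮ : Submodule ℝ V)} (h₁ : Orthonormal ℝ b₁) (h₂ : Orthonormal ℝ b₂) :
    Orthonormal ℝ (Sum.elim (fun i => (b₁ i : V)) (fun i => (b₂ i : V))) := by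
  constructor
  · rintro (i | i)
    · exact h₁.1 i
    · exact h₂.1 i
  · rintro (i | i) (j | j) hij
    · exact h₁.2 fun h => hij (by rw [h])
    · exact Submodule.inner_right_of_mem_orthogonal (b₁ i).2 (b₂ j).2
    · exact Submodule.inner_left_of_mem_orthogonal (b₁ j).2 (b₂ i).2
    · exact h₂.2 fun h => hij (by rw [h])

end sec8

lemma CB.preimage_subtype {V : Type} [NormedAddCommGroup V] [InnerProductSpace ℝ V]
    [FiniteDimensional ℝ V] (W : Submodule ℝ V) {M : Set V} (hM : CB M) :
    CB (W.subtypeL ⁻¹' M) := by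
  refine ⟨?_, hM.2.linear_preimage W.subtype⟩
  have : Topology.IsClosedEmbedding W.subtypeL :=
    LinearMap.isClosedEmbedding_of_injective (f := W.subtype) (by simp)
  exact this.isCompact_preimage hM.1

lemma image_preimage_subtype {V : Type} [NormedAddCommGroup V] [InnerProductSpace ℝ V]
    (W : Submodule ℝ V) {M : Set V} (hM : M ⊆ W) : W.subtypeL '' (W.subtypeL ⁻¹' M) = M := by
  rw [Set.image_preimage_eq_inter_range]
  exact Set.inter_eq_left.2 fun x hx => ⟨⟨x, hM hx⟩, rfl⟩

theorem hadwiger_vanish (n : ℕ) : ∀ (V : Type) [NormedAddCommGroup V] [InnerProductSpace ℝ V]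
    [FiniteDimensional ℝ V], Module.finrank ℝ V = n → ∀ f : Set V → ℝ, VC f → NullVal f →
    TransInv f → ReflInv f → CubeVanish f → ∀ K, CB K → f K = 0 := by
  induction n using Nat.strong_induction_on with
  | _ n ih =>
  intro V _ _ _ hn f hf hnull ht hr hq K hK
  rcases Nat.eq_zero_or_pos n with h0 | hpos
  · subst h0
    have hsub : Subsingleton V := Module.finrank_zero_iff.1 hn
    rcases K.eq_empty_or_nonempty with rfl | hKn
    · exact hf.empty
    have h1 := hq (Fin 0) (fun _ => 0) ⟨fun i => i.elim0, fun i => i.elim0⟩ (by simp [hn])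
    have h2 : K = cube (fun _ : Fin 0 => (0:V)) := by
      ext x
      obtain ⟨y, hy⟩ := hKn
      exact ⟨fun _ i => i.elim0, fun _ => by rwa [Subsingleton.elim x y]⟩
    rw [h2, h1]
  have ho : OrthSumVanish f := by
    intro W hW1 hW2 L₁ L₂ hL₁ hL₂ h₁ h₂
    have hd := Submodule.finrank_add_finrank_orthogonal W
    have hd1 : Module.finrank ℝ W < n := hn ▸ Submodule.finrank_lt hW2
    have hd0 : 0 < Module.finrank ℝ W := by
      rw [Nat.pos_iff_ne_zero]
      exact fun h => hW1 (Submodule.finrank_eq_zero.1 h)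
    have hd2 : Module.finrank ℝ (Wᗮ : Submodule ℝ V) < n := by omega
    have key := ih _ hd1 W rfl (fun L : Set W => f (W.subtypeL '' L + L₂)) (hf.comp_add W hL₂)
      (hnull.restrict W hL₂ h₂) (ht.restrict W hL₂) (hr.restrict W hL₂ h₂) ?_ _
      (hL₁.preimage_subtype W)
    · simp only [image_preimage_subtype W h₁] at key
      exact key
    · intro ι₁ _ b₁ hb₁ hc₁
      have hM : CB (W.subtypeL '' cube b₁) := (CB.cube hb₁ hc₁).image _
      have hMW : W.subtypeL '' cube b₁ ⊆ (Wᗮᗮ : Submodule ℝ V) := by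
        rintro _ ⟨x, _, rfl⟩
        exact W.le_orthogonal_orthogonal x.2
      have key2 := ih _ hd2 (Wᗮ : Submodule ℝ V) rfl
        (fun L : Set (Wᗮ : Submodule ℝ V) => f (Wᗮ.subtypeL '' L + W.subtypeL '' cube b₁))
        (hf.comp_add Wᗮ hM)
        (hnull.restrict Wᗮ hM hMW) (ht.restrict Wᗮ hM) (hr.restrict Wᗮ hM hMW) ?_ _
        (hL₂.preimage_subtype Wᗮ)
      · simp only [image_preimage_subtype Wᗮ h₂] at key2
        rw [add_comm] at key2
        exact key2
      · intro ι₂ _ b₂ hb₂ hc₂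
        simp only
        rw [cube_sum]
        exact hq _ _ (orthonormal_sum W hb₁ hb₂) (by rw [Fintype.card_sum, hc₁, hc₂, hd])
  have hpos' : 0 < Module.finrank ℝ V := by omega
  have hadd : AddVal f := fun K L hK hKn hL hLn =>
    additivity hf ht (fun L hL => dilation hpos' hf hnull ht ho hL) hK hKn hL hLn
  exact vanish_of_add hf ht hadd hr hq hpos' hK


section sec9
variable {N : ℕ}

lemma qc_indicator {K : Set (EuclideanSpace ℝ (Fin N))} (hK : CB K) {t : ℝ} (ht : 0 ≤ t) :
    QuasiConcave (K.indicator fun _ => t) := by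
  refine ⟨fun x => Set.indicator_nonneg (fun _ _ => ht) x, fun s hs => ?_⟩
  by_cases hst : s ≤ t
  · right
    have : {x | s ≤ K.indicator (fun _ => t) x} = K := by
      ext x
      by_cases hx : x ∈ K
      · simp [hx, hst]
      · simp [hx, hs]
    rw [this]
    exact hK
  · left
    ext x
    by_cases hx : x ∈ K
    · simp [hx, not_le.mp hst]
    · simp [hx, hs]

lemma vc_mu (μ : (EuclideanSpace ℝ (Fin N) → ℝ) → ℝ) (hval : IsValuation μ)
    (hcont : IsContinuousVal μ) {t : ℝ} (ht : 0 ≤ t) :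
    VC (fun K : Set (EuclideanSpace ℝ (Fin N)) => μ (K.indicator fun _ => t)) := by
  refine ⟨?_, ?_, ?_⟩
  · simp only [Set.indicator_empty]
    exact hval.1
  · intro K L hK hL hKL
    have hmax : (fun x => max (K.indicator (fun _ => t) x) (L.indicator (fun _ => t) x))
        = (K ∪ L).indicator fun _ => t := by
      ext x
      by_cases h1 : x ∈ K <;> by_cases h2 : x ∈ L <;> simp [h1, h2, ht]
    have hmin : (fun x => min (K.indicator (fun _ => t) x) (L.indicator (fun _ => t) x))
        = (K ∩ L).indicator fun _ => t := by
      ext x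
      by_cases h1 : x ∈ K <;> by_cases h2 : x ∈ L <;> simp [h1, h2, ht]
    have h := hval.2 (K.indicator fun _ => t) (L.indicator fun _ => t)
      (qc_indicator hK ht) (qc_indicator hL ht)
      (by rw [hmax]; exact qc_indicator ⟨hK.1.union hL.1, hKL⟩ ht)
    rw [hmax, hmin] at h
    exact h
  · intro K hK hanti
    have hI : CB (⋂ i, K i) :=
      ⟨(hK 0).1.of_isClosed_subset (isClosed_iInter fun i => (hK i).1.isClosed)
        (Set.iInter_subset K 0), convex_iInter fun i => (hK i).2⟩
    refine hcont (fun i => (K i).indicator fun _ => t) _ (fun i => qc_indicator (hK i) ht)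
      (qc_indicator hI ht) (Or.inr ?_) ?_
    · intro i j hij x
      exact Set.indicator_le_indicator_of_subset (hanti hij) (fun _ => ht) x
    · intro x
      by_cases hx : x ∈ ⋂ i, K i
      · have : ∀ i, x ∈ K i := Set.mem_iInter.mp hx
        simp [this]
      · have hx' := hx
        rw [Set.mem_iInter, not_forall] at hx'
        obtain ⟨i0, hi0⟩ := hx'
        rw [Set.indicator_of_notMem hx]
        refine tendsto_const_nhds.congr' ?_
        filter_upwards [eventually_ge_atTop i0] with i hi
        rw [Set.indicator_of_notMem]
        exact fun h => hi0 (hanti hi h)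

lemma vc_vol : VC (fun K : Set (EuclideanSpace ℝ (Fin N)) => (volume K).toReal) := by
  refine ⟨by simp, ?_, ?_⟩
  · intro K L hK hL _
    have h := measure_union_add_inter (μ := volume) K hL.1.measurableSet
    have hKL : CB (K ∩ L) := hK.inter hL
    rw [← ENNReal.toReal_add (hK.1.union hL.1).measure_lt_top.ne hKL.1.measure_lt_top.ne, h,
      ENNReal.toReal_add hK.1.measure_lt_top.ne hL.1.measure_lt_top.ne]
  · intro K hK hanti
    have hI : IsCompact (⋂ i, K i) :=
      (hK 0).1.of_isClosed_subset (isClosed_iInter fun i => (hK i).1.isClosed)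
        (Set.iInter_subset K 0)
    refine (ENNReal.tendsto_toReal hI.measure_lt_top.ne).comp ?_
    exact tendsto_measure_iInter_atTop (fun i => (hK i).1.measurableSet.nullMeasurableSet) hanti
      ⟨0, (hK 0).1.measure_lt_top.ne⟩

lemma hyperplane_null (u : EuclideanSpace ℝ (Fin N)) (hu : u ≠ 0) (c : ℝ) :
    volume {x : EuclideanSpace ℝ (Fin N) | inner ℝ u x = c} = 0 := by
  by_cases hne : ∃ x0 : EuclideanSpace ℝ (Fin N), inner ℝ u x0 = c
  · obtain ⟨x0, hx0⟩ := hne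
    have hset : {x : EuclideanSpace ℝ (Fin N) | inner ℝ u x = c}
        = (fun x => x + (-x0)) ⁻¹' ((LinearMap.ker (innerₗ (EuclideanSpace ℝ (Fin N)) u) :
          Submodule ℝ _) : Set (EuclideanSpace ℝ (Fin N))) := by
      ext x
      simp only [Set.mem_ofPred_eq, Set.mem_preimage, SetLike.mem_coe, LinearMap.mem_ker,
        innerₗ_apply_apply, inner_add_right, inner_neg_right, hx0]
      constructor <;> intro h <;> linarith
    rw [hset, measure_preimage_add_right]
    refine Measure.addHaar_submodule _ _ ?_
    intro htop
    have : u ∈ LinearMap.ker (innerₗ (EuclideanSpace ℝ (Fin N)) u) := by rw [htop]; trivial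
    simp at this
    exact hu this
  · have : {x : EuclideanSpace ℝ (Fin N) | inner ℝ u x = c} = ∅ := by
      ext x
      simp only [Set.mem_ofPred_eq, Set.mem_empty_iff_false, iff_false]
      exact fun h => hne ⟨x, h⟩
    rw [this, measure_empty]

lemma mu_image (μ : (EuclideanSpace ℝ (Fin N) → ℝ) → ℝ) (hinv : IsInvariantVal μ)
    {t : ℝ} (ht : 0 ≤ t) {K : Set (EuclideanSpace ℝ (Fin N))} (hK : CB K)
    (T : EuclideanSpace ℝ (Fin N) ≃ᵢ EuclideanSpace ℝ (Fin N)) :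
    μ ((T ⁻¹' K).indicator fun _ => t) = μ (K.indicator fun _ => t) := by
  rw [← hinv T _ (qc_indicator hK ht)]
  rfl

lemma vol_preimage (T : EuclideanSpace ℝ (Fin N) ≃ᵢ EuclideanSpace ℝ (Fin N))
    (K : Set (EuclideanSpace ℝ (Fin N))) : volume (T ⁻¹' K) = volume K := by
  have h := T.measurePreserving_euclideanHausdorffMeasure N
  rw [EuclideanSpace.euclideanHausdorffMeasure_eq_volume] at h
  exact h.measure_preimage_emb T.toHomeomorph.measurableEmbedding K

/-- the unit cube -/
def QQ (N : ℕ) : Set (EuclideanSpace ℝ (Fin N)) := {x | ∀ i, 0 ≤ x i ∧ x i ≤ 1}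

lemma QQ_eq : QQ N = cube (fun i => EuclideanSpace.basisFun (Fin N) ℝ i) := by
  ext x
  simp only [QQ, cube, Set.mem_ofPred_eq, ← OrthonormalBasis.repr_apply_apply,
    EuclideanSpace.basisFun_repr]

lemma cb_QQ : CB (QQ N) := by
  rw [QQ_eq]
  exact CB.cube (EuclideanSpace.basisFun (Fin N) ℝ).orthonormal (by simp)

lemma vol_QQ : volume (QQ N) = 1 := by
  have h : QQ N = (WithLp.ofLp : EuclideanSpace ℝ (Fin N) → (Fin N → ℝ)) ⁻¹' (Set.Icc 0 1) := by
    ext x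
    simp [QQ, Pi.le_def, forall_and]
  rw [h, (PiLp.volume_preserving_ofLp (Fin N)).measure_preimage
    measurableSet_Icc.nullMeasurableSet, Real.volume_Icc_pi]
  simp

lemma cube_eq_preimage {ι : Type} [Fintype ι] (b : ι → EuclideanSpace ℝ (Fin N))
    (hb : Orthonormal ℝ b)
    (hcard : Fintype.card ι = Module.finrank ℝ (EuclideanSpace ℝ (Fin N))) :
    ∃ T : EuclideanSpace ℝ (Fin N) ≃ₗᵢ[ℝ] EuclideanSpace ℝ (Fin N), cube b = T ⁻¹' QQ N := by
  have hN : Fintype.card ι = N := by simpa using hcard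
  let e : ι ≃ Fin N := Fintype.equivFinOfCardEq hN
  let B : OrthonormalBasis ι ℝ (EuclideanSpace ℝ (Fin N)) :=
    OrthonormalBasis.mk hb (hb.linearIndependent.span_eq_top_of_card_eq_finrank' hcard).ge
  refine ⟨(B.reindex e).repr, ?_⟩
  ext x
  simp only [cube, QQ, Set.mem_preimage, Set.mem_ofPred_eq, OrthonormalBasis.repr_apply_apply,
    OrthonormalBasis.reindex_apply, B, OrthonormalBasis.coe_mk]
  constructor
  · intro h i
    exact h _
  · intro h i
    simpa using h (e i)

lemma mu_eq (μ : (EuclideanSpace ℝ (Fin N) → ℝ) → ℝ)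
    (hval : IsValuation μ) (hinv : IsInvariantVal μ)
    (hcont : IsContinuousVal μ) (hsimple : IsSimpleVal μ) {t : ℝ} (ht : 0 ≤ t)
    (K : Set (EuclideanSpace ℝ (Fin N))) (hK : CB K) :
    μ (K.indicator fun _ => t) = μ ((QQ N).indicator fun _ => t) * (volume K).toReal := by
  set c := μ ((QQ N).indicator fun _ => t) with hc
  have key := hadwiger_vanish N (EuclideanSpace ℝ (Fin N)) (by simp)
    (fun K => μ (K.indicator fun _ => t) + (-c) * (volume K).toReal)
    ((vc_mu μ hval hcont ht).add (vc_vol.const_mul (-c))) ?_ ?_ ?_ ?_ K hK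
  · linarith
  · intro K hK u hu d hd
    have h0 : volume K = 0 := measure_mono_null hd (hyperplane_null u hu d)
    have h1 : μ (K.indicator fun _ => t) = 0 := by
      refine hsimple _ (qc_indicator hK ht) ?_
      have : ∀ᵐ x : EuclideanSpace ℝ (Fin N), x ∉ K := measure_eq_zero_iff_ae_notMem.mp h0
      filter_upwards [this] with x hx
      simp [hx]
    simp [h0, h1]
  · intro K hK v
    have hs : ({v} + K : Set (EuclideanSpace ℝ (Fin N))) = (IsometryEquiv.addRight (-v)) ⁻¹' K := by
      ext x
      rw [mem_singleton_add]
      simp [sub_eq_add_neg]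
    simp only
    rw [hs, mu_image μ hinv ht hK, vol_preimage]
  · intro K hK u
    have hs : hypRefl u '' K = (hypRefl u).symm.toIsometryEquiv ⁻¹' K := by
      ext x
      constructor
      · rintro ⟨y, hy, rfl⟩
        simpa using hy
      · intro hx
        exact ⟨(hypRefl u).symm x, hx, by simp⟩
    simp only
    rw [hs, mu_image μ hinv ht hK, vol_preimage]
  · intro ι _ b hb hcard
    obtain ⟨T, hT⟩ := cube_eq_preimage b hb hcard
    have hT' : cube b = T.toIsometryEquiv ⁻¹' QQ N := hT
    simp only
    rw [hT', mu_image μ hinv ht cb_QQ, vol_preimage, vol_QQ]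
    simp [hc]

lemma phi_cont (μ : (EuclideanSpace ℝ (Fin N) → ℝ) → ℝ) (hcont : IsContinuousVal μ) :
    ContinuousOn (fun t : ℝ => μ ((QQ N).indicator fun _ => t)) (Set.Ici 0) := by
  intro t ht
  have ht : 0 ≤ t := ht
  refine tendsto_of_seq_tendsto ?_
  intro s hs
  obtain ⟨hs1, hs2⟩ := tendsto_nhdsWithin_iff.mp hs
  obtain ⟨n0, hn0⟩ := eventually_atTop.mp hs2
  refine tendsto_of_subseq_tendsto ?_
  intro ns hns
  -- shift so that all terms are nonnegative
  obtain ⟨m0, hm0⟩ := eventually_atTop.mp (hns.eventually_ge_atTop n0)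
  obtain ⟨g, hg⟩ := exists_increasing_or_nonincreasing_subseq (· ≤ ·) (fun k => s (ns (k + m0)))
  refine ⟨fun k => g k + m0, ?_⟩
  have hgt : Tendsto (fun k => ns (g k + m0)) atTop atTop := by
    refine hns.comp ?_
    exact tendsto_atTop_mono (fun k => Nat.le_add_right _ _) g.strictMono.tendsto_atTop
  have hpos : ∀ k, 0 ≤ s (ns (g k + m0)) := fun k => hn0 _ (hm0 _ (by omega))
  refine hcont (fun k => (QQ N).indicator fun _ => s (ns (g k + m0))) _
    (fun k => qc_indicator cb_QQ (hpos k)) (qc_indicator cb_QQ ht) ?_ ?_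
  · rcases hg with hg | hg
    · left
      refine monotone_nat_of_le_succ fun k x => ?_
      exact Set.indicator_le_indicator (hg k (k + 1) (by omega))
    · right
      refine antitone_nat_of_succ_le fun k x => ?_
      exact Set.indicator_le_indicator (not_le.mp (hg k (k + 1) (by omega))).le
  · intro x
    by_cases hx : x ∈ QQ N
    · simp only [Set.indicator_of_mem hx]
      exact hs1.comp hgt
    · simp [hx]

end sec9

end hadwiger_proof

/-- For an invariant, continuous and simple valuation `μ` on `C^N` there exists a
continuous `φ : [0,∞) → ℝ` with `φ(0) = 0` such that `μ(t·1_K) = φ(t)·vol_N(K)` for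
every `t ≥ 0` and every convex body `K`. -/
theorem simple_valuation_on_multiples_of_indicators {N : ℕ}
    (μ : (EuclideanSpace ℝ (Fin N) → ℝ) → ℝ)
    (hval : IsValuation μ) (hinv : IsInvariantVal μ)
    (hcont : IsContinuousVal μ) (hsimple : IsSimpleVal μ) :
    ∃ φ : ℝ → ℝ, ContinuousOn φ (Set.Ici 0) ∧ φ 0 = 0 ∧
      ∀ t : ℝ, 0 ≤ t → ∀ K : Set (EuclideanSpace ℝ (Fin N)), IsConvexBody K →
        μ (K.indicator fun _ => t) = φ t * (volume K).toReal := by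
  refine ⟨fun t => μ ((QQ N).indicator fun _ => t), phi_cont μ hcont, ?_, ?_⟩
  · simp only [Set.indicator_zero]
    exact hval.1
  · intro t ht K hK
    exact mu_eq μ hval hinv hcont hsimple ht K hK.2

end
end

section
/- Let N = 1. A map μ : C^1 → ℝ is an invariant and continuous valuation on C^1 if and only if there exist a continuous function φ_0 : [0,∞) → ℝ with φ_0(0) = 0 and a continuous function φ_1 : [0,∞) → ℝ with φ_1 ≡ 0 on [0,δ] for some δ > 0, such that μ(f) = φ_0(M(f)) + ∫_ℝ φ_1(f(x)) dx for every f ∈ C^1, where M(f) is the maximum of f on ℝ (with M(0) = 0) and the integral is with respect to the Lebesgue measure on ℝ. -/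
open Filter Topology MeasureTheory

noncomputable section

/-- A function `f : ℝ → ℝ` is quasi-concave if it is nonnegative and all its
superlevel sets `{x | t ≤ f x}` for `t > 0` are empty or compact and convex. -/
def QuasiConcave1 (f : ℝ → ℝ) : Prop :=
  (∀ x, 0 ≤ f x) ∧
  ∀ t : ℝ, 0 < t →
    {x | t ≤ f x} = ∅ ∨ (IsCompact {x | t ≤ f x} ∧ Convex ℝ {x | t ≤ f x})

/-- `μ` is a valuation on `C^1`: it vanishes on the zero function and satisfies the
inclusion-exclusion property with respect to pointwise max and min. -/
def IsValuation1 (μ : (ℝ → ℝ) → ℝ) : Prop :=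
  μ (fun _ => 0) = 0 ∧
  ∀ f g : ℝ → ℝ, QuasiConcave1 f → QuasiConcave1 g →
    QuasiConcave1 (fun x => max (f x) (g x)) →
    μ (fun x => max (f x) (g x)) + μ (fun x => min (f x) (g x)) = μ f + μ g

/-- `μ` is invariant under rigid motions (isometries) of `ℝ`. -/
def IsInvariantVal1 (μ : (ℝ → ℝ) → ℝ) : Prop :=
  ∀ (T : ℝ ≃ᵢ ℝ) (f : ℝ → ℝ), QuasiConcave1 f → μ (fun x => f (T x)) = μ f

/-- `μ` is continuous: it preserves limits of monotone pointwise convergent sequences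
of quasi-concave functions. -/
def IsContinuousVal1 (μ : (ℝ → ℝ) → ℝ) : Prop :=
  ∀ (fi : ℕ → ℝ → ℝ) (f : ℝ → ℝ),
    (∀ i, QuasiConcave1 (fi i)) → QuasiConcave1 f →
    (Monotone fi ∨ Antitone fi) →
    (∀ x, Tendsto (fun i => fi i x) atTop (𝓝 (f x))) →
    Tendsto (fun i => μ (fi i)) atTop (𝓝 (μ f))

/-- `μ` is monotone increasing: `f ≤ g` pointwise implies `μ f ≤ μ g`. -/
def IsMonotoneVal1 (μ : (ℝ → ℝ) → ℝ) : Prop :=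
  ∀ f g : ℝ → ℝ, QuasiConcave1 f → QuasiConcave1 g → (∀ x, f x ≤ g x) → μ f ≤ μ g

/-! ### Basic facts on quasi-concave functions -/

lemma QuasiConcave1.exists_Icc {f : ℝ → ℝ} (hf : QuasiConcave1 f) {t : ℝ} (ht : 0 < t) :
    ∃ a b, {x | t ≤ f x} = Set.Icc a b := by
  rcases Set.eq_empty_or_nonempty {x | t ≤ f x} with h | h
  · exact ⟨1, 0, by rw [h]; simp⟩
  · rcases hf.2 t ht with h' | ⟨hc, hv⟩
    · exact absurd h' h.ne_empty
    · exact ⟨_, _, eq_Icc_of_connected_compact ⟨h, hv.isPreconnected⟩ hc⟩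

lemma qc_of_Icc {f : ℝ → ℝ} (h0 : ∀ x, 0 ≤ f x)
    (h : ∀ t : ℝ, 0 < t → ∃ a b, {x | t ≤ f x} = Set.Icc a b) : QuasiConcave1 f := by
  refine ⟨h0, fun t ht => Or.inr ?_⟩
  obtain ⟨a, b, hab⟩ := h t ht
  rw [hab]
  exact ⟨isCompact_Icc, convex_Icc a b⟩

lemma QuasiConcave1.compact {f : ℝ → ℝ} (hf : QuasiConcave1 f) {t : ℝ} (ht : 0 < t) :
    IsCompact {x | t ≤ f x} := by
  obtain ⟨a, b, h⟩ := hf.exists_Icc ht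
  rw [h]; exact isCompact_Icc

lemma QuasiConcave1.usc {f : ℝ → ℝ} (hf : QuasiConcave1 f) : UpperSemicontinuous f := by
  rw [upperSemicontinuous_iff_isOpen_preimage]
  intro y
  rcases le_or_gt y 0 with hy | hy
  · have : f ⁻¹' Set.Iio y = ∅ := by
      ext x
      have := hf.1 x
      simp only [Set.mem_preimage, Set.mem_Iio, Set.mem_empty_iff_false, iff_false, not_lt]
      linarith
    rw [this]; exact isOpen_empty
  · have : f ⁻¹' Set.Iio y = {x | y ≤ f x}ᶜ := by
      ext x; simp
    rw [this]; exact (hf.compact hy).isClosed.isOpen_compl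

lemma QuasiConcave1.meas {f : ℝ → ℝ} (hf : QuasiConcave1 f) : Measurable f :=
  hf.usc.measurable

lemma QuasiConcave1.exists_max {f : ℝ → ℝ} (hf : QuasiConcave1 f) : ∃ x₀, ∀ x, f x ≤ f x₀ := by
  by_cases h : ∃ y, 0 < f y
  · obtain ⟨y, hy⟩ := h
    obtain ⟨a, ha, hm⟩ := UpperSemicontinuousOn.exists_isMaxOn (s := {x | f y ≤ f x})
      ⟨y, le_refl (f y)⟩ (hf.compact hy) (hf.usc.upperSemicontinuousOn _)
    refine ⟨a, fun x => ?_⟩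
    by_cases hx : f y ≤ f x
    · exact hm hx
    · exact (not_le.1 hx).le.trans ha
  · push Not at h
    exact ⟨0, fun x => (h x).trans (hf.1 0)⟩

lemma sSup_range_eq {f : ℝ → ℝ} {x₀ : ℝ} (h : ∀ x, f x ≤ f x₀) : sSup (Set.range f) = f x₀ :=
  IsGreatest.csSup_eq ⟨⟨x₀, rfl⟩, by rintro _ ⟨x, rfl⟩; exact h x⟩

lemma QuasiConcave1.le_M {f : ℝ → ℝ} (hf : QuasiConcave1 f) (x : ℝ) :
    f x ≤ sSup (Set.range f) := by
  obtain ⟨x₀, h⟩ := hf.exists_max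
  rw [sSup_range_eq h]; exact h x

lemma M_nonneg {f : ℝ → ℝ} (hf : QuasiConcave1 f) : 0 ≤ sSup (Set.range f) :=
  (hf.1 0).trans (hf.le_M 0)

lemma M_max {f g : ℝ → ℝ} (hf : QuasiConcave1 f) (hg : QuasiConcave1 g) :
    sSup (Set.range fun x => max (f x) (g x)) = max (sSup (Set.range f)) (sSup (Set.range g)) := by
  obtain ⟨x, hx⟩ := hf.exists_max
  obtain ⟨y, hy⟩ := hg.exists_max
  rw [sSup_range_eq hx, sSup_range_eq hy]
  apply IsGreatest.csSup_eq
  constructor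
  · rcases le_total (f x) (g y) with h | h
    · exact ⟨y, by simp only; rw [max_eq_right h, max_eq_right ((hx y).trans h)]⟩
    · exact ⟨x, by simp only; rw [max_eq_left h, max_eq_left ((hy x).trans h)]⟩
  · rintro _ ⟨z, rfl⟩
    exact max_le_max (hx z) (hy z)

lemma M_min {f g : ℝ → ℝ} (hf : QuasiConcave1 f) (hg : QuasiConcave1 g)
    (hfg : QuasiConcave1 fun x => max (f x) (g x)) :
    sSup (Set.range fun x => min (f x) (g x)) = min (sSup (Set.range f)) (sSup (Set.range g)) := by
  obtain ⟨x, hx⟩ := hf.exists_max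
  obtain ⟨y, hy⟩ := hg.exists_max
  rw [sSup_range_eq hx, sSup_range_eq hy]
  have hle : ∀ z, min (f z) (g z) ≤ min (f x) (g y) := fun z => min_le_min (hx z) (hy z)
  suffices h : ∃ z, min (f x) (g y) ≤ min (f z) (g z) by
    obtain ⟨z, hz⟩ := h
    apply IsGreatest.csSup_eq
    refine ⟨⟨z, le_antisymm (hle z) hz⟩, ?_⟩
    rintro _ ⟨z, rfl⟩
    exact hle z
  rcases (le_min (hf.1 x) (hg.1 y)).eq_or_lt with h0 | h0
  · exact ⟨0, by rw [← h0]; exact le_min (hf.1 0) (hg.1 0)⟩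
  · set m := min (f x) (g y) with hm
    obtain ⟨a, b, hab⟩ := hfg.exists_Icc h0
    have hpre : IsPreconnected {z | m ≤ max (f z) (g z)} := by
      rw [hab]; exact isPreconnected_Icc
    obtain ⟨z, -, hz1, hz2⟩ := isPreconnected_closed_iff.1 hpre {z | m ≤ f z} {z | m ≤ g z}
      (hf.compact h0).isClosed (hg.compact h0).isClosed
      (fun z hz => (le_max_iff (a := m) (b := f z) (c := g z)).1 hz)
      ⟨x, le_max_of_le_left (min_le_left (f x) (g y)), min_le_left (f x) (g y)⟩
      ⟨y, le_max_of_le_right (min_le_right (f x) (g y)), min_le_right (f x) (g y)⟩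
    exact ⟨z, le_min hz1 hz2⟩

lemma M_tendsto {fi : ℕ → ℝ → ℝ} {f : ℝ → ℝ} (hfi : ∀ i, QuasiConcave1 (fi i))
    (hf : QuasiConcave1 f) (hmono : Monotone fi ∨ Antitone fi)
    (hlim : ∀ x, Tendsto (fun i => fi i x) atTop (𝓝 (f x))) :
    Tendsto (fun i => sSup (Set.range (fi i))) atTop (𝓝 (sSup (Set.range f))) := by
  obtain ⟨x, hx⟩ := hf.exists_max
  have hM := sSup_range_eq hx
  rcases hmono with h | h
  · have hle : ∀ i z, fi i z ≤ f z := fun i z =>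
      Monotone.ge_of_tendsto (f := fun i => fi i z) (fun _ _ hij => h hij z) (hlim z) i
    refine tendsto_of_tendsto_of_tendsto_of_le_of_le (hM ▸ hlim x) tendsto_const_nhds
      (fun i => (hfi i).le_M x) (fun i => ?_)
    apply csSup_le (Set.range_nonempty _)
    rintro _ ⟨z, rfl⟩
    exact (hle i z).trans (hf.le_M z)
  · have hle : ∀ i z, f z ≤ fi i z := fun i z =>
      Antitone.le_of_tendsto (f := fun i => fi i z) (fun _ _ hij => h hij z) (hlim z) i
    have hanti : ∀ i j, i ≤ j → sSup (Set.range (fi j)) ≤ sSup (Set.range (fi i)) := by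
      intro i j hij
      apply csSup_le (Set.range_nonempty _)
      rintro _ ⟨z, rfl⟩
      exact (h hij z).trans ((hfi i).le_M z)
    refine tendsto_order.2 ⟨fun a ha => Eventually.of_forall fun i => ?_, fun c hc => ?_⟩
    · exact ha.trans_le (hM ▸ (hle i x).trans ((hfi i).le_M x))
    · by_contra hcon
      have hall : ∀ i, c ≤ sSup (Set.range (fi i)) := by
        intro i
        by_contra hi
        push Not at hi
        exact hcon (eventually_atTop.2 ⟨i, fun j hj => (hanti i j hj).trans_lt hi⟩)
      have hc0 : 0 < c := (M_nonneg hf).trans_lt hc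
      obtain ⟨z, hz⟩ := IsCompact.nonempty_iInter_of_sequence_nonempty_isCompact_isClosed
        (fun i => {z | c ≤ fi i z}) (fun i z hz => le_trans hz (h (Nat.le_succ i) z))
        (fun i => by
          obtain ⟨y, hy⟩ := (hfi i).exists_max
          exact ⟨y, by simpa [sSup_range_eq hy] using hall i⟩)
        ((hfi 0).compact hc0) (fun i => ((hfi i).compact hc0).isClosed)
      have : c ≤ f z := ge_of_tendsto' (hlim z) fun i => Set.mem_iInter.1 hz i
      linarith [hf.le_M z]

/-! ### The functionals of the characterization are valuations -/

def nuF (φ₀ φ₁ : ℝ → ℝ) (f : ℝ → ℝ) : ℝ := φ₀ (sSup (Set.range f)) + ∫ x, φ₁ (f x)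

lemma exists_bound {φ : ℝ → ℝ} (hφ : ContinuousOn φ (Set.Ici 0)) {δ : ℝ} (hδ : 0 < δ)
    (h0 : ∀ t ∈ Set.Icc (0:ℝ) δ, φ t = 0) {F : ℝ → ℝ} (hF : QuasiConcave1 F) :
    ∃ B : ℝ → ℝ, Integrable B ∧ ∀ x s, 0 ≤ s → s ≤ F x → ‖φ s‖ ≤ B x := by
  obtain ⟨C, hC⟩ := (isCompact_Icc (a := (0:ℝ)) (b := sSup (Set.range F))).exists_bound_of_continuousOn
    (hφ.mono Set.Icc_subset_Ici_self)
  refine ⟨Set.indicator {x | δ ≤ F x} fun _ => C, ?_, ?_⟩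
  · rw [integrable_indicator_iff (hF.compact hδ).measurableSet]
    exact integrableOn_const (hF.compact hδ).measure_lt_top.ne
  · intro x s hs hsF
    by_cases hx : δ ≤ F x
    · rw [Set.indicator_of_mem (by exact hx)]
      exact hC s ⟨hs, hsF.trans (hF.le_M x)⟩
    · rw [Set.indicator_of_notMem (by exact hx), h0 s ⟨hs, by linarith⟩]
      simp

lemma meas_comp {φ : ℝ → ℝ} (hφ : ContinuousOn φ (Set.Ici 0)) {f : ℝ → ℝ} (hf : Measurable f)
    (h0 : ∀ x, 0 ≤ f x) : Measurable fun x => φ (f x) := by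
  have hc : Continuous fun t : ℝ => φ (max t 0) :=
    hφ.comp_continuous (by fun_prop) (fun t => le_max_right t 0)
  have : (fun x => φ (f x)) = fun x => φ (max (f x) 0) := by
    ext x; rw [max_eq_left (h0 x)]
  rw [this]
  exact hc.measurable.comp hf

lemma nuF_props {φ₀ φ₁ : ℝ → ℝ} {δ : ℝ} (hδ : 0 < δ) (hφ₀ : ContinuousOn φ₀ (Set.Ici 0))
    (h₀ : φ₀ 0 = 0) (hφ₁ : ContinuousOn φ₁ (Set.Ici 0))
    (h₁ : ∀ t ∈ Set.Icc (0:ℝ) δ, φ₁ t = 0) :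
    IsValuation1 (nuF φ₀ φ₁) ∧ IsInvariantVal1 (nuF φ₀ φ₁) ∧ IsContinuousVal1 (nuF φ₀ φ₁) := by
  refine ⟨⟨?_, ?_⟩, ?_, ?_⟩
  · have : φ₁ 0 = 0 := h₁ 0 ⟨le_rfl, hδ.le⟩
    simp [nuF, this, h₀]
  · intro f g hf hg hfg
    have hInteg : ∀ (k : ℝ → ℝ), Measurable k → (∀ x, 0 ≤ k x) →
        (∀ x, k x ≤ max (f x) (g x)) → Integrable fun x => φ₁ (k x) := by
      intro k hk hk0 hkF
      obtain ⟨B, hB, hB'⟩ := exists_bound hφ₁ hδ h₁ hfg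
      exact hB.mono' (meas_comp hφ₁ hk hk0).aestronglyMeasurable
        (Eventually.of_forall fun x => hB' x _ (hk0 x) (hkF x))
    have i1 := hInteg f hf.meas hf.1 (fun x => le_max_left _ _)
    have i2 := hInteg g hg.meas hg.1 (fun x => le_max_right _ _)
    have i3 := hInteg _ hfg.meas hfg.1 (fun x => le_rfl)
    have i4 := hInteg (fun x => min (f x) (g x)) (hf.meas.min hg.meas)
      (fun x => le_min (hf.1 x) (hg.1 x)) (fun x => min_le_max)
    have e1 : (∫ x, φ₁ (max (f x) (g x))) + ∫ x, φ₁ (min (f x) (g x))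
        = (∫ x, φ₁ (f x)) + ∫ x, φ₁ (g x) := by
      rw [← integral_add i3 i4, ← integral_add i1 i2]
      congr 1
      ext x
      rcases le_total (f x) (g x) with h | h
      · simp [h, add_comm]
      · simp [h]
    have e2 : φ₀ (max (sSup (Set.range f)) (sSup (Set.range g)))
        + φ₀ (min (sSup (Set.range f)) (sSup (Set.range g)))
        = φ₀ (sSup (Set.range f)) + φ₀ (sSup (Set.range g)) := by
      rcases le_total (sSup (Set.range f)) (sSup (Set.range g)) with h | h
      · simp [h, add_comm]
      · simp [h]
    simp only [nuF]
    rw [M_max hf hg, M_min hf hg hfg]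
    linarith
  · intro T f hf
    simp only [nuF]
    have e1 : Set.range (fun x => f (T x)) = Set.range f := T.surjective.range_comp f
    have e2 : ∫ x, φ₁ (f (T x)) = ∫ x, φ₁ (f x) := by
      have hT := T.measurePreserving_hausdorffMeasure 1
      rw [hausdorffMeasure_real] at hT
      exact hT.integral_comp T.toHomeomorph.measurableEmbedding (fun x => φ₁ (f x))
    rw [e1, e2]
  · intro fi f hfi hf hmono hlim
    simp only [nuF]
    apply Tendsto.add
    · have := hφ₀ (sSup (Set.range f)) (M_nonneg hf)
      refine this.tendsto.comp (tendsto_nhdsWithin_iff.2 ⟨M_tendsto hfi hf hmono hlim, ?_⟩)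
      exact Eventually.of_forall fun i => M_nonneg (hfi i)
    · obtain ⟨F, hF, hFi⟩ : ∃ F, QuasiConcave1 F ∧ ∀ i x, fi i x ≤ F x := by
        rcases hmono with h | h
        · exact ⟨f, hf, fun i z =>
            Monotone.ge_of_tendsto (f := fun i => fi i z) (fun _ _ hij => h hij z) (hlim z) i⟩
        · exact ⟨fi 0, hfi 0, fun i z => h (Nat.zero_le i) z⟩
      obtain ⟨B, hB, hB'⟩ := exists_bound hφ₁ hδ h₁ hF
      refine tendsto_integral_of_dominated_convergence B
        (fun i => (meas_comp hφ₁ (hfi i).meas (hfi i).1).aestronglyMeasurable) hB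
        (fun i => Eventually.of_forall fun x => hB' x _ ((hfi i).1 x) (hFi i x))
        (Eventually.of_forall fun x => ?_)
      refine (hφ₁ (f x) (hf.1 x)).tendsto.comp (tendsto_nhdsWithin_iff.2 ⟨hlim x, ?_⟩)
      exact Eventually.of_forall fun i => (hfi i).1 x

/-! ### Step functions and uniqueness -/

/-- The step function equal to `t` on `[a,b]` and zero elsewhere. -/
def stp (t a b : ℝ) : ℝ → ℝ := fun x => if a ≤ x ∧ x ≤ b then t else 0

lemma stp_zero (a b : ℝ) : stp 0 a b = fun _ => 0 := by
  ext x; simp [stp]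

lemma qc_stp {t : ℝ} (ht : 0 ≤ t) (a b : ℝ) : QuasiConcave1 (stp t a b) := by
  apply qc_of_Icc
  · intro x; unfold stp; split_ifs <;> simp [ht]
  · intro s hs
    by_cases hst : s ≤ t
    · refine ⟨a, b, ?_⟩
      ext x
      simp only [stp, Set.mem_ofPred_eq, Set.mem_Icc]
      split_ifs with h
      · simp [h, hst]
      · simp only [h, iff_false, not_le]; exact hs
    · refine ⟨1, 0, ?_⟩
      ext x
      simp only [stp, Set.mem_ofPred_eq, Set.mem_Icc]
      split_ifs with h
      · simp only [hst, false_iff]; rintro ⟨h1, h2⟩; linarith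
      · constructor
        · intro h; linarith
        · rintro ⟨h1, h2⟩; linarith

lemma qc_min_const {f : ℝ → ℝ} (hf : QuasiConcave1 f) {c : ℝ} (hc : 0 ≤ c) :
    QuasiConcave1 fun x => min (f x) c := by
  apply qc_of_Icc
  · intro x; exact le_min (hf.1 x) hc
  · intro s hs
    by_cases hsc : s ≤ c
    · obtain ⟨a, b, h⟩ := hf.exists_Icc hs
      refine ⟨a, b, ?_⟩
      rw [← h]; ext x; simp [hsc]
    · refine ⟨1, 0, ?_⟩
      ext x; simp [hsc]

lemma eq_of_discrete {μ ν : (ℝ → ℝ) → ℝ} (hμ : IsValuation1 μ) (hν : IsValuation1 ν)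
    (hst : ∀ t a b, 0 ≤ t → a ≤ b → μ (stp t a b) = ν (stp t a b)) {h : ℝ} (hh : 0 < h) (k : ℕ) :
    ∀ f : ℝ → ℝ, QuasiConcave1 f → (∀ x, ∃ n : ℕ, f x = n * h ∧ n ≤ k) → μ f = ν f := by
  induction k with
  | zero =>
    intro f hf hd
    have : f = fun _ => 0 := by
      ext x
      obtain ⟨n, hn, hn0⟩ := hd x
      have : n = 0 := by omega
      simp [hn, this]
    rw [this, hμ.1, hν.1]
  | succ k ih =>
    intro f hf hd
    have hpos : (0:ℝ) < ((k + 1 : ℕ) : ℝ) * h := by positivity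
    obtain ⟨a, b, hab⟩ := hf.exists_Icc hpos
    have hmem : ∀ x, ((k + 1 : ℕ) : ℝ) * h ≤ f x ↔ a ≤ x ∧ x ≤ b := fun x => by
      rw [← Set.mem_Icc, ← hab]; rfl
    have hk0 : (0:ℝ) ≤ (k:ℝ) * h := by positivity
    have hklt : (k:ℝ) * h < ((k + 1 : ℕ) : ℝ) * h := by push_cast; nlinarith
    have key : ∀ x, (f x = ((k + 1 : ℕ) : ℝ) * h ∧ a ≤ x ∧ x ≤ b) ∨
        (f x ≤ (k:ℝ) * h ∧ ¬ (a ≤ x ∧ x ≤ b)) := by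
      intro x
      obtain ⟨n, hn, hnk⟩ := hd x
      rcases Nat.lt_or_ge k n with hlt | hge
      · have : n = k + 1 := by omega
        subst this
        exact Or.inl ⟨hn, (hmem x).1 hn.ge⟩
      · have : f x ≤ (k:ℝ) * h := by
          rw [hn]; gcongr
        exact Or.inr ⟨this, fun hx => by have := (hmem x).2 hx; linarith⟩
    have hf' := qc_min_const hf hk0
    have ihf := ih _ hf' (by
      intro x
      rcases key x with ⟨hx, -⟩ | ⟨hx, -⟩
      · exact ⟨k, by rw [hx, min_eq_right hklt.le], le_rfl⟩
      · obtain ⟨n, hn, hnk⟩ := hd x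
        refine ⟨n, by rw [min_eq_left hx, hn], ?_⟩
        rw [hn] at hx
        exact_mod_cast le_of_mul_le_mul_right hx hh)
    by_cases hle : a ≤ b
    · have hg := qc_stp hpos.le a b
      have emax : (fun x => max (min (f x) (k * h)) (stp (((k + 1 : ℕ) : ℝ) * h) a b x)) = f := by
        ext x
        have := hf.1 x
        rcases key x with ⟨hx, hx'⟩ | ⟨hx, hx'⟩
        · simp only [stp, if_pos hx']
          rw [hx, min_eq_right hklt.le, max_eq_right hklt.le]
        · simp only [stp, if_neg hx']
          rw [min_eq_left hx, max_eq_left this]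
      have emin : (fun x => min (min (f x) (k * h)) (stp (((k + 1 : ℕ) : ℝ) * h) a b x))
          = stp (k * h) a b := by
        ext x
        have := hf.1 x
        rcases key x with ⟨hx, hx'⟩ | ⟨hx, hx'⟩
        · simp only [stp, if_pos hx']
          rw [hx, min_eq_right hklt.le, min_eq_left hklt.le]
        · simp only [stp, if_neg hx']
          rw [min_eq_left hx, min_eq_right this]
      have v1 := hμ.2 _ _ hf' hg (by rw [emax]; exact hf)
      have v2 := hν.2 _ _ hf' hg (by rw [emax]; exact hf)
      rw [emax, emin] at v1 v2
      have s1 := hst _ a b hpos.le hle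
      have s2 := hst _ a b hk0 hle
      linarith
    · have : (fun x => min (f x) (k * h)) = f := by
        ext x
        rcases key x with ⟨hx, hx1, hx2⟩ | ⟨hx, hx'⟩
        · exact absurd (hx1.trans hx2) hle
        · exact min_eq_left hx
      rw [this] at ihf
      exact ihf

lemma eq_of_stp {μ ν : (ℝ → ℝ) → ℝ} (hμ : IsValuation1 μ) (hν : IsValuation1 ν)
    (hμc : IsContinuousVal1 μ) (hνc : IsContinuousVal1 ν)
    (hst : ∀ t a b, 0 ≤ t → a ≤ b → μ (stp t a b) = ν (stp t a b))
    {f : ℝ → ℝ} (hf : QuasiConcave1 f) : μ f = ν f := by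
  set fi : ℕ → ℝ → ℝ := fun i x => (⌊f x * 2 ^ i⌋₊ : ℝ) * (1 / 2 ^ i) with hfi
  have hqc : ∀ i, QuasiConcave1 (fi i) := by
    intro i
    apply qc_of_Icc
    · intro x; simp only [hfi]; positivity
    · intro t ht
      have hp : (0:ℝ) < 2 ^ i := by positivity
      have hpos : 0 < (⌈t * 2 ^ i⌉₊ : ℝ) / 2 ^ i := by
        apply div_pos _ hp
        exact_mod_cast Nat.ceil_pos.2 (by positivity)
      obtain ⟨a, b, hab⟩ := hf.exists_Icc hpos
      refine ⟨a, b, ?_⟩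
      rw [← hab]
      ext x
      simp only [hfi, Set.mem_ofPred_eq]
      rw [div_le_iff₀ hp, ← Nat.le_floor_iff (mul_nonneg (hf.1 x) hp.le), Nat.ceil_le,
        mul_one_div, le_div_iff₀ hp]
  have hmono : Monotone fi := by
    apply monotone_nat_of_le_succ
    intro i x
    simp only [hfi]
    have hp : (0:ℝ) < 2 ^ i := by positivity
    rw [mul_one_div, mul_one_div, div_le_div_iff₀ hp (by positivity), pow_succ]
    have h1 : 2 * ⌊f x * 2 ^ i⌋₊ ≤ ⌊f x * (2 ^ i * 2)⌋₊ := by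
      apply Nat.le_floor
      have := Nat.floor_le (mul_nonneg (hf.1 x) hp.le)
      push_cast
      linarith
    have h2 : (2:ℝ) * ⌊f x * 2 ^ i⌋₊ ≤ ⌊f x * (2 ^ i * 2)⌋₊ := by exact_mod_cast h1
    nlinarith
  have hlim : ∀ x, Tendsto (fun i => fi i x) atTop (𝓝 (f x)) := by
    intro x
    have hz : Tendsto (fun i : ℕ => f x - (1 / 2 : ℝ) ^ i) atTop (𝓝 (f x)) := by
      have := (tendsto_const_nhds (x := f x)).sub
        (tendsto_pow_atTop_nhds_zero_of_lt_one (r := (1/2:ℝ)) (by norm_num) (by norm_num))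
      simpa using this
    refine tendsto_of_tendsto_of_tendsto_of_le_of_le hz tendsto_const_nhds (fun i => ?_)
      (fun i => ?_)
    · have hp : (0:ℝ) < 2 ^ i := by positivity
      simp only [hfi]
      rw [one_div_pow, mul_one_div, sub_le_iff_le_add, ← add_div, le_div_iff₀ hp]
      exact (Nat.lt_floor_add_one _).le
    · have hp : (0:ℝ) < 2 ^ i := by positivity
      simp only [hfi]
      rw [mul_one_div, div_le_iff₀ hp]
      exact Nat.floor_le (mul_nonneg (hf.1 x) hp.le)
  have heq : ∀ i, μ (fi i) = ν (fi i) := by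
    intro i
    have hp : (0:ℝ) < 2 ^ i := by positivity
    refine eq_of_discrete hμ hν hst (h := 1 / 2 ^ i) (by positivity)
      ⌊sSup (Set.range f) * 2 ^ i⌋₊ (fi i) (hqc i) (fun x => ⟨_, rfl, ?_⟩)
    apply Nat.floor_le_floor
    have := hf.le_M x
    gcongr
  have t1 := hμc fi f hqc hf (Or.inl hmono) hlim
  have t2 := hνc fi f hqc hf (Or.inl hmono) hlim
  simp only [heq] at t1
  exact tendsto_nhds_unique t1 t2

/-! ### Values on step functions -/

lemma continuousWithinAt_of_mono_seq {F : ℝ → ℝ} {a : ℝ}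
    (h : ∀ u : ℕ → ℝ, (∀ i, 0 ≤ u i) → (Monotone u ∨ Antitone u) → Tendsto u atTop (𝓝 a) →
      Tendsto (fun i => F (u i)) atTop (𝓝 (F a))) : ContinuousWithinAt F (Set.Ici 0) a := by
  have key : ∀ u : ℕ → ℝ, (∀ i, 0 ≤ u i) → Tendsto u atTop (𝓝 a) →
      Tendsto (fun i => F (u i)) atTop (𝓝 (F a)) := by
    intro u hu hua
    apply tendsto_of_subseq_tendsto
    intro ns hns
    obtain ⟨g, hg⟩ := exists_increasing_or_nonincreasing_subseq (· ≤ ·) (fun n => u (ns n))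
    refine ⟨g, h (fun n => u (ns (g n))) (fun i => hu _) ?_
      (hua.comp (hns.comp g.strictMono.tendsto_atTop))⟩
    rcases hg with hg | hg
    · left
      intro m n hmn
      rcases hmn.eq_or_lt with rfl | hlt
      · exact le_rfl
      · exact hg m n hlt
    · right
      intro m n hmn
      rcases hmn.eq_or_lt with rfl | hlt
      · exact le_rfl
      · exact (not_le.1 (hg m n hlt)).le
  apply tendsto_of_seq_tendsto
  intro x hx
  obtain ⟨hx1, hx2⟩ := tendsto_nhdsWithin_iff.1 hx
  have hm : Tendsto (fun i => F (max (x i) 0)) atTop (𝓝 (F a)) := by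
    apply key _ (fun i => le_max_right _ _)
    refine hx1.congr' ?_
    filter_upwards [hx2] with i hi
    exact (max_eq_left hi).symm
  refine hm.congr' ?_
  filter_upwards [hx2] with i hi
  simp only [Function.comp]
  rw [max_eq_left (by exact hi)]

lemma cont_level {μ : (ℝ → ℝ) → ℝ} (hc : IsContinuousVal1 μ) (l : ℝ) :
    ContinuousOn (fun t => μ (stp t 0 l)) (Set.Ici 0) := by
  intro a ha
  apply continuousWithinAt_of_mono_seq
  intro u hu hm hlim
  apply hc (fun i => stp (u i) 0 l) _ (fun i => qc_stp (hu i) _ _) (qc_stp ha _ _)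
  · rcases hm with hm | hm
    · left
      intro i j hij x
      simp only [stp]
      split_ifs
      · exact hm hij
      · exact le_rfl
    · right
      intro i j hij x
      simp only [stp]
      split_ifs
      · exact hm hij
      · exact le_rfl
  · intro x
    simp only [stp]
    split_ifs
    · exact hlim
    · exact tendsto_const_nhds

lemma cont_length {μ : (ℝ → ℝ) → ℝ} (hc : IsContinuousVal1 μ) {t : ℝ} (ht : 0 ≤ t) :
    ContinuousWithinAt (fun l => μ (stp t 0 l)) (Set.Ici 0) 0 := by
  apply continuousWithinAt_of_mono_seq
  intro u hu hm hlim
  rcases hm with hm | hm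
  · have : ∀ i, u i = 0 := fun i => le_antisymm (hm.ge_of_tendsto hlim i) (hu i)
    simp only [this]
    exact tendsto_const_nhds
  · apply hc (fun i => stp t 0 (u i)) _ (fun i => qc_stp ht _ _) (qc_stp ht _ _)
    · right
      intro i j hij x
      simp only [stp]
      have := hm hij
      split_ifs with h1 h2
      · exact le_rfl
      · exact absurd ⟨h1.1, h1.2.trans this⟩ h2
      · exact ht
      · exact le_rfl
    · intro x
      by_cases hx : 0 < x
      · refine (tendsto_const_nhds (x := (0:ℝ))).congr' ?_ |>.trans_eq ?_
        · filter_upwards [hlim.eventually (gt_mem_nhds hx)] with i hi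
          simp only [stp]
          rw [if_neg (fun h => by linarith [h.2])]
        · simp only [stp]
          rw [if_neg (fun h => by linarith [h.2])]
      · push Not at hx
        have : ∀ i, stp t 0 (u i) x = stp t 0 0 x := by
          intro i
          simp only [stp, hx, hx.trans (hu i)]
        simp only [this]
        exact tendsto_const_nhds

lemma mu_translate {μ : (ℝ → ℝ) → ℝ} (hi : IsInvariantVal1 μ) {t : ℝ} (ht : 0 ≤ t) (a b : ℝ) :
    μ (stp t a b) = μ (stp t 0 (b - a)) := by
  rw [← hi (IsometryEquiv.addRight a) _ (qc_stp ht a b)]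
  congr 1
  ext x
  simp only [stp, IsometryEquiv.addRight_apply]
  congr 1
  apply propext
  constructor <;> rintro ⟨h1, h2⟩ <;> constructor <;> linarith

lemma mu_add {μ : (ℝ → ℝ) → ℝ} (hv : IsValuation1 μ) (hi : IsInvariantVal1 μ) {t : ℝ}
    (ht : 0 ≤ t) {l m : ℝ} (hl : 0 ≤ l) (hm : 0 ≤ m) :
    μ (stp t 0 (l + m)) + μ (stp t 0 0) = μ (stp t 0 l) + μ (stp t 0 m) := by
  have emax : (fun x => max (stp t 0 l x) (stp t l (l + m) x)) = stp t 0 (l + m) := by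
    ext x
    simp only [stp]
    split_ifs <;> grind
  have emin : (fun x => min (stp t 0 l x) (stp t l (l + m) x)) = stp t l l := by
    ext x
    simp only [stp]
    split_ifs <;> grind
  have h := hv.2 _ _ (qc_stp ht 0 l) (qc_stp ht l (l + m)) (by rw [emax]; exact qc_stp ht _ _)
  rw [emax, emin, mu_translate hi ht l l, mu_translate hi ht l (l + m)] at h
  simpa using h

lemma additive_linear {G : ℝ → ℝ} (hadd : ∀ l m, 0 ≤ l → 0 ≤ m → G (l + m) = G l + G m)
    (hc : ContinuousWithinAt G (Set.Ici 0) 0) {l : ℝ} (hl : 0 ≤ l) : G l = l * G 1 := by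
  have hG0 : G 0 = 0 := by
    have := hadd 0 0 le_rfl le_rfl
    simp only [add_zero] at this
    linarith
  let H : ℝ →+ ℝ := AddMonoidHom.mk' (fun x => G (max x 0) - G (max (-x) 0)) (by
    intro x y
    have e : max x 0 + max y 0 + max (-(x + y)) 0 = max (-x) 0 + max (-y) 0 + max (x + y) 0 := by
      grind
    have h0 : ∀ z : ℝ, 0 ≤ max z 0 := fun z => le_max_right _ _
    have e' := congrArg G e
    rw [hadd _ _ (add_nonneg (h0 _) (h0 _)) (h0 _), hadd _ _ (h0 _) (h0 _),
      hadd _ _ (add_nonneg (h0 _) (h0 _)) (h0 _), hadd _ _ (h0 _) (h0 _)] at e'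
    linarith)
  have hHl : ∀ x, 0 ≤ x → H x = G x := by
    intro x hx
    change G (max x 0) - G (max (-x) 0) = G x
    rw [max_eq_left hx, max_eq_right (by linarith), hG0, sub_zero]
  have hHc : Continuous H := by
    apply continuous_of_continuousAt_zero
    change ContinuousAt (fun x => G (max x 0) - G (max (-x) 0)) 0
    have c1 : Tendsto (fun x : ℝ => max x 0) (𝓝 0) (𝓝[Set.Ici 0] 0) := by
      refine tendsto_nhdsWithin_iff.2 ⟨?_, Eventually.of_forall fun x => Set.mem_Ici.2 (le_max_right _ _)⟩
      have : Continuous fun x : ℝ => max x 0 := by fun_prop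
      simpa using this.tendsto 0
    have c2 : Tendsto (fun x : ℝ => max (-x) 0) (𝓝 0) (𝓝[Set.Ici 0] 0) := by
      refine tendsto_nhdsWithin_iff.2 ⟨?_, Eventually.of_forall fun x => Set.mem_Ici.2 (le_max_right _ _)⟩
      have : Continuous fun x : ℝ => max (-x) 0 := by fun_prop
      simpa using this.tendsto 0
    have := (hc.tendsto.comp c1).sub (hc.tendsto.comp c2)
    simpa [ContinuousAt] using this
  have := map_real_smul H hHc l 1
  simp only [smul_eq_mul, mul_one] at this
  rwa [hHl l hl, hHl 1 zero_le_one] at this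

lemma mu_stp {μ : (ℝ → ℝ) → ℝ} (hv : IsValuation1 μ) (hi : IsInvariantVal1 μ)
    (hc : IsContinuousVal1 μ) {t : ℝ} (ht : 0 ≤ t) {a b : ℝ} (hab : a ≤ b) :
    μ (stp t a b) = μ (stp t 0 0) + (b - a) * (μ (stp t 0 1) - μ (stp t 0 0)) := by
  rw [mu_translate hi ht]
  have := additive_linear (G := fun l => μ (stp t 0 l) - μ (stp t 0 0))
    (fun l m hl hm => by have := mu_add hv hi ht hl hm; linarith)
    ((cont_length hc ht).sub continuousWithinAt_const) (l := b - a) (by linarith)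
  linarith

lemma nuF_stp {φ₀ φ₁ : ℝ → ℝ} (h₁ : φ₁ 0 = 0) {t : ℝ} (ht : 0 ≤ t) {a b : ℝ} (hab : a ≤ b) :
    nuF φ₀ φ₁ (stp t a b) = φ₀ t + (b - a) * φ₁ t := by
  have hm : ∀ x, stp t a b x ≤ stp t a b a := by
    intro x
    simp only [stp]
    split_ifs <;> grind
  have ha : stp t a b a = t := by simp [stp, hab]
  have e : (fun x => φ₁ (stp t a b x)) = Set.indicator (Set.Icc a b) (fun _ => φ₁ t) := by
    ext x
    by_cases hx : a ≤ x ∧ x ≤ b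
    · rw [Set.indicator_of_mem (by exact hx)]; simp [stp, hx]
    · rw [Set.indicator_of_notMem (by exact hx)]; simp only [stp, if_neg hx, h₁]
  simp only [nuF]
  rw [sSup_range_eq hm, ha, e, integral_indicator measurableSet_Icc]
  simp [hab]

/-! ### Vanishing near zero -/

lemma vanish_near_zero {μ : (ℝ → ℝ) → ℝ} (hv : IsValuation1 μ) (hi : IsInvariantVal1 μ)
    (hc : IsContinuousVal1 μ) :
    ∃ δ > (0:ℝ), ∀ t ∈ Set.Icc (0:ℝ) δ, μ (stp t 0 1) - μ (stp t 0 0) = 0 := by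
  set φ : ℝ → ℝ := fun t => μ (stp t 0 1) - μ (stp t 0 0) with hφ
  by_contra hcon
  push Not at hcon
  have hφ0 : φ 0 = 0 := by simp [hφ, stp_zero]
  have hglb : IsGLB {t : ℝ | 0 < t ∧ φ t ≠ 0} 0 := by
    refine ⟨fun t ht => ht.1.le, fun b hb => ?_⟩
    by_contra hb0
    push Not at hb0
    obtain ⟨t, ht, htφ⟩ := hcon (b / 2) (by linarith)
    have ht0 : 0 < t := lt_of_le_of_ne ht.1 (fun h => htφ (h ▸ hφ0))
    have := hb ⟨ht0, htφ⟩
    linarith [ht.2]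
  obtain ⟨t, htanti, htpos, htlim, htmem⟩ := hglb.exists_seq_strictAnti_tendsto_of_notMem
    (fun h => lt_irrefl _ h.1) (by
      obtain ⟨t, ht, htφ⟩ := hcon 1 one_pos
      exact ⟨t, lt_of_le_of_ne ht.1 (fun h => htφ (h ▸ hφ0)), htφ⟩)
  have htφ : ∀ n, φ (t n) ≠ 0 := fun n => (htmem n).2
  set X : ℕ → ℝ := fun n => ∑ i ∈ Finset.range (n + 1), (1 + 1 / |φ (t i)|) with hX
  have hXs : ∀ n, X (n + 1) = X n + (1 + 1 / |φ (t (n + 1))|) := fun n => by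
    simp only [hX]; rw [Finset.sum_range_succ]
  have hd : ∀ n, 0 < 1 / |φ (t n)| := fun n => by
    have := abs_pos.2 (htφ n); positivity
  have hXmono : StrictMono X := strictMono_nat_of_lt_succ fun n => by
    rw [hXs]; linarith [hd (n + 1)]
  have hXn : ∀ n : ℕ, (n:ℝ) ≤ X n := by
    intro n
    induction n with
    | zero => simp only [hX]; simp; positivity
    | succ n ih => rw [hXs]; push_cast; linarith [hd (n + 1)]
  have hex : ∀ x : ℝ, ∃ n, x ≤ X n := fun x => by
    obtain ⟨n, hn⟩ := exists_nat_ge x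
    exact ⟨n, hn.trans (hXn n)⟩
  classical
  set N : ℝ → ℕ := fun x => Nat.find (hex x) with hN
  have hNle : ∀ x n, N x ≤ n ↔ x ≤ X n := by
    intro x n
    constructor
    · intro h
      exact (Nat.find_spec (hex x)).trans (hXmono.monotone h)
    · intro h; exact Nat.find_min' _ h
  set f : ℝ → ℝ := fun x => if 0 ≤ x then t (N x) else 0 with hf
  set fi : ℕ → ℝ → ℝ := fun n x => if 0 ≤ x ∧ x ≤ X n then t (N x) else 0 with hfi
  have hlev : ∀ s : ℝ, 0 < s → ∃ k, ∀ m, s ≤ t m ↔ m < k := by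
    intro s hs
    have hexk : ∃ k, t k < s := (htlim.eventually (gt_mem_nhds hs)).exists
    refine ⟨Nat.find hexk, fun m => ?_⟩
    constructor
    · intro h
      by_contra hm
      push Not at hm
      have := htanti.antitone hm
      linarith [Nat.find_spec hexk]
    · intro h
      exact not_lt.1 (Nat.find_min hexk h)
  have hqf : QuasiConcave1 f := by
    apply qc_of_Icc
    · intro x; simp only [hf]; split_ifs
      · exact (htpos _).le
      · exact le_rfl
    · intro s hs
      obtain ⟨k, hk⟩ := hlev s hs
      rcases k with _ | k
      · refine ⟨1, 0, ?_⟩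
        ext x
        simp only [hf, Set.mem_ofPred_eq, Set.mem_Icc]
        split_ifs
        · rw [hk]; constructor
          · intro h; omega
          · rintro ⟨h1, h2⟩; linarith
        · constructor
          · intro h; linarith
          · rintro ⟨h1, h2⟩; linarith
      · refine ⟨0, X k, ?_⟩
        ext x
        simp only [hf, Set.mem_ofPred_eq, Set.mem_Icc]
        split_ifs with h0
        · rw [hk, Nat.lt_succ_iff, hNle]; simp [h0]
        · simp only [h0, false_and, iff_false, not_le]; exact hs
  have hqfi : ∀ n, QuasiConcave1 (fi n) := by
    intro n
    apply qc_of_Icc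
    · intro x; simp only [hfi]; split_ifs
      · exact (htpos _).le
      · exact le_rfl
    · intro s hs
      obtain ⟨a, b, hab⟩ := hqf.exists_Icc hs
      refine ⟨max a 0, min b (X n), ?_⟩
      rw [← Set.Icc_inter_Icc, ← hab]
      ext x
      simp only [hfi, hf, Set.mem_ofPred_eq, Set.mem_Icc, Set.mem_inter_iff]
      split_ifs with h0 h1 h1
      · simp [h0]
      · exact absurd h0.1 h1
      · simp only [h0, and_false, iff_false, not_le]; exact hs
      · simp only [h0, and_false, iff_false, not_le]; exact hs
  have hmono : Monotone fi := by
    intro i j hij x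
    simp only [hfi]
    have := hXmono.monotone hij
    split_ifs with h1 h2
    · exact le_rfl
    · exact absurd ⟨h1.1, h1.2.trans this⟩ h2
    · exact (htpos _).le
    · exact le_rfl
  have hlim : ∀ x, Tendsto (fun i => fi i x) atTop (𝓝 (f x)) := by
    intro x
    refine tendsto_const_nhds.congr' ?_
    filter_upwards [eventually_ge_atTop (N x)] with i hi
    have := (hNle x i).1 hi
    simp [hf, hfi, this]
  have hstep : ∀ n, μ (fi (n + 1)) - μ (fi n) = (X (n + 1) - X n) * φ (t (n + 1)) := by
    intro n
    have hX0 : 0 ≤ X n := (Nat.cast_nonneg n).trans (hXn n)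
    have hX1 : X n ≤ X (n + 1) := (hXmono (Nat.lt_succ_self n)).le
    have htp := htpos (n + 1)
    have hcase : ∀ x, x ≤ X n → t (n + 1) ≤ t (N x) := fun x hx =>
      htanti.antitone (((hNle x n).2 hx).trans (Nat.le_succ n))
    have hcase2 : ∀ x, ¬ x ≤ X n → x ≤ X (n + 1) → N x = n + 1 := by
      intro x h1 h2
      rw [← hNle] at h1 h2
      omega
    have emax : (fun x => max (fi n x) (stp (t (n + 1)) 0 (X (n + 1)) x)) = fi (n + 1) := by
      ext x
      simp only [hfi, stp]
      by_cases h0 : 0 ≤ x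
      · by_cases h1 : x ≤ X n
        · simp only [h0, h1, h1.trans hX1, and_self, if_true]
          exact max_eq_left (hcase x h1)
        · by_cases h2 : x ≤ X (n + 1)
          · simp only [h0, h1, h2, and_self, and_false, if_true, if_false, hcase2 x h1 h2]
            exact max_eq_right htp.le
          · simp [h1, h2]
      · simp [h0]
    have emin : (fun x => min (fi n x) (stp (t (n + 1)) 0 (X (n + 1)) x))
        = stp (t (n + 1)) 0 (X n) := by
      ext x
      simp only [hfi, stp]
      by_cases h0 : 0 ≤ x
      · by_cases h1 : x ≤ X n
        · simp only [h0, h1, h1.trans hX1, and_self, if_true]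
          exact min_eq_right (hcase x h1)
        · by_cases h2 : x ≤ X (n + 1)
          · simp only [h0, h1, h2, and_self, and_false, if_true, if_false]
            exact min_eq_left htp.le
          · simp [h1, h2]
      · simp [h0]
    have h := hv.2 _ _ (hqfi n) (qc_stp htp.le 0 (X (n + 1))) (by rw [emax]; exact hqfi _)
    rw [emax, emin, mu_stp hv hi hc htp.le hX0, mu_stp hv hi hc htp.le (hX0.trans hX1)] at h
    simp only [hφ]
    linarith
  have hT := hc fi f hqfi hqf (Or.inl hmono) hlim
  have hT' := ((tendsto_add_atTop_iff_nat 1).2 hT).sub hT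
  rw [sub_self] at hT'
  have habs := hT'.abs
  rw [abs_zero] at habs
  obtain ⟨n, hn⟩ := (habs.eventually (gt_mem_nhds one_pos)).exists
  rw [hstep, hXs, abs_mul] at hn
  have hp := abs_pos.2 (htφ (n + 1))
  have e1 : X n + (1 + 1 / |φ (t (n + 1))|) - X n = 1 + 1 / |φ (t (n + 1))| := by ring
  rw [e1, abs_of_pos (by linarith [hd (n + 1)]), add_mul, one_div_mul_cancel hp.ne'] at hn
  linarith

lemma qc_min {f g : ℝ → ℝ} (hf : QuasiConcave1 f) (hg : QuasiConcave1 g) :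
    QuasiConcave1 fun x => min (f x) (g x) := by
  apply qc_of_Icc
  · intro x; exact le_min (hf.1 x) (hg.1 x)
  · intro s hs
    obtain ⟨a, b, h⟩ := hf.exists_Icc hs
    obtain ⟨c, d, h'⟩ := hg.exists_Icc hs
    refine ⟨max a c, min b d, ?_⟩
    rw [← Set.Icc_inter_Icc, ← h, ← h']
    ext x; simp

lemma qc_comp (T : ℝ ≃ᵢ ℝ) {f : ℝ → ℝ} (hf : QuasiConcave1 f) :
    QuasiConcave1 fun x => f (T x) := by
  refine ⟨fun x => hf.1 _, fun t ht => ?_⟩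
  have e : {x | t ≤ f (T x)} = T.symm '' {x | t ≤ f x} := by
    ext x
    constructor
    · intro h; exact ⟨T x, h, by simp⟩
    · rintro ⟨y, hy, rfl⟩; simpa using hy
  rw [e]
  rcases hf.2 t ht with h | ⟨h1, h2⟩
  · left; rw [h]; simp
  · right
    refine ⟨h1.image T.symm.continuous, ?_⟩
    apply Real.convex_iff_isPreconnected.2
    exact h2.isPreconnected.image _ T.symm.continuous.continuousOn

/-- Characterization of invariant continuous valuations on `C^1`:
`μ` is an invariant and continuous valuation if and only if
`μ(f) = φ₀(M(f)) + ∫_ℝ φ₁(f(x)) dx`, where `M(f) = sup f` (attained as a maximum),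
`φ₀ : [0,∞) → ℝ` is continuous with `φ₀(0) = 0` and `φ₁ : [0,∞) → ℝ` is continuous
and vanishes on `[0,δ]` for some `δ > 0`. -/
theorem characterization_valuations_dim_one (μ : (ℝ → ℝ) → ℝ) :
    (IsValuation1 μ ∧ IsInvariantVal1 μ ∧ IsContinuousVal1 μ) ↔
    ∃ φ₀ φ₁ : ℝ → ℝ, ∃ δ > (0:ℝ),
      ContinuousOn φ₀ (Set.Ici 0) ∧ φ₀ 0 = 0 ∧
      ContinuousOn φ₁ (Set.Ici 0) ∧ (∀ t ∈ Set.Icc (0:ℝ) δ, φ₁ t = 0) ∧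
      ∀ f : ℝ → ℝ, QuasiConcave1 f →
        μ f = φ₀ (sSup (Set.range f)) + ∫ x, φ₁ (f x) := by
  constructor
  · rintro ⟨hv, hi, hc⟩
    obtain ⟨δ, hδ, h₁⟩ := vanish_near_zero hv hi hc
    have c₀ := cont_level hc 0
    have c₁ : ContinuousOn (fun t => μ (stp t 0 1) - μ (stp t 0 0)) (Set.Ici 0) :=
      (cont_level hc 1).sub c₀
    have z₀ : μ (stp 0 0 0) = 0 := by rw [stp_zero]; exact hv.1
    refine ⟨fun t => μ (stp t 0 0), fun t => μ (stp t 0 1) - μ (stp t 0 0), δ, hδ, c₀, z₀, c₁,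
      h₁, fun f hf => ?_⟩
    obtain ⟨nv, -, nc⟩ := nuF_props (φ₀ := fun t => μ (stp t 0 0)) hδ c₀ z₀ c₁ h₁
    refine eq_of_stp hv nv hc nc (fun t a b ht hab => ?_) hf
    rw [mu_stp hv hi hc ht hab, nuF_stp (h₁ 0 ⟨le_rfl, hδ.le⟩) ht hab]
  · rintro ⟨φ₀, φ₁, δ, hδ, c₀, z₀, c₁, h₁, h⟩
    obtain ⟨⟨n0, nv⟩, ni, nc⟩ := nuF_props hδ c₀ z₀ c₁ h₁
    have h' : ∀ f, QuasiConcave1 f → μ f = nuF φ₀ φ₁ f := h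
    have q0 : QuasiConcave1 fun _ => 0 := by
      rw [← stp_zero 0 0]; exact qc_stp le_rfl 0 0
    refine ⟨⟨by rw [h' _ q0]; exact n0, ?_⟩, ?_, ?_⟩
    · intro f g hf hg hfg
      rw [h' f hf, h' g hg, h' _ hfg, h' _ (qc_min hf hg), nv f g hf hg hfg]
    · intro T f hf
      rw [h' f hf, h' _ (qc_comp T hf), ni T f hf]
    · intro fi f hfi hf hm hl
      rw [h' f hf]
      exact (nc fi f hfi hf hm hl).congr fun i => (h' _ (hfi i)).symm

end
end
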